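/- arXiv:2110.00515 — 4 statements merged into one kernel-verified Lean document; each statement's English description precedes it below -/
import Mathlib

section
/- Thue's approximation theorem: let α be a real algebraic number of degree d over ℚ, with d ≥ 3, and let ρ be a real number with ρ > d/2. Then the set of pairs of integers (p, q) with q ≥ 1 such that q^ρ · |q·α − p| ≤ 1 is finite. -/
open Polynomial

lemma thue_hasse_dvd {R : Type*} [CommRing R] (G : R[X]) (a : R) (m : ℕ) :
    (X - C a) ^ m ∣ G ↔ ∀ j < m, (hasseDeriv j G).eval a = 0 := by
  rw [X_sub_C_pow_dvd_iff, X_pow_dvd_iff]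
  simp only [← taylor_apply, taylor_coeff]

lemma thue_wronskian_shift {R : Type*} [CommRing R] (P Q : R[X]) (c : R) :
    wronskian (P - C c * Q) Q = wronskian P Q := by
  simp [wronskian]; ring

lemma thue_dvd_wronskian {R : Type*} [CommRing R] (P Q : R[X]) (a c : R) (m : ℕ)
    (h : (X - C a) ^ m ∣ P - C c * Q) : (X - C a) ^ (m - 1) ∣ wronskian P Q := by
  rw [← thue_wronskian_shift P Q c]
  unfold wronskian
  refine dvd_sub (dvd_mul_of_dvd_left ((pow_dvd_pow _ (Nat.sub_le _ _)).trans h) _)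
    (dvd_mul_of_dvd_left (pow_sub_one_dvd_derivative_of_pow_dvd h) _)

lemma thue_map_wronskian {R S : Type*} [CommRing R] [CommRing S] (f : R →+* S) (P Q : R[X]) :
    (wronskian P Q).map f = wronskian (P.map f) (Q.map f) := by
  simp [wronskian, derivative_map]

lemma thue_minpoly_pow_dvd (α : ℝ) (hα : IsIntegral ℚ α) (m : ℕ) :
    ∀ f : ℚ[X], (X - C α) ^ m ∣ f.map (algebraMap ℚ ℝ) → (minpoly ℚ α) ^ m ∣ f := by
  induction m with
  | zero => intro f _; simp
  | succ m ih =>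
    intro f hf
    have hirr := minpoly.irreducible hα
    have hroot : aeval α f = 0 := by
      have : (X - C α) ∣ f.map (algebraMap ℚ ℝ) := (dvd_pow_self _ (Nat.succ_ne_zero m)).trans hf
      rw [dvd_iff_isRoot, IsRoot, eval_map_algebraMap] at this
      exact this
    obtain ⟨g, rfl⟩ := minpoly.dvd ℚ α hroot
    rw [pow_succ']
    refine mul_dvd_mul_left _ (ih g ?_)
    have hμ : aeval α (minpoly ℚ α) = 0 := minpoly.aeval ℚ α
    have h1 : (X - C α) ∣ (minpoly ℚ α).map (algebraMap ℚ ℝ) := by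
      rw [dvd_iff_isRoot, IsRoot, eval_map_algebraMap, hμ]
    obtain ⟨h, hh⟩ := h1
    have hsep : ((minpoly ℚ α).map (algebraMap ℚ ℝ)).Separable :=
      (hirr.separable).map
    have hnd : ¬ (X - C α) ∣ h := by
      intro hd
      rw [hh] at hsep
      obtain ⟨k, rfl⟩ := hd
      have := hsep.squarefree (X - C α) ⟨k, by ring⟩
      exact (irreducible_X_sub_C α).not_isUnit this
    rw [Polynomial.map_mul, hh, pow_succ', mul_assoc] at hf
    have hf' := (mul_dvd_mul_iff_left (X_sub_C_ne_zero α)).1 hf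
    exact (prime_X_sub_C α).pow_dvd_of_dvd_mul_left m hnd hf'

lemma thue_wronskian_ne (α : ℝ) (hα : IsIntegral ℚ α) (hd : 2 ≤ (minpoly ℚ α).natDegree)
    (P Q : ℚ[X]) (hPQ : P ≠ 0 ∨ Q ≠ 0) (m n : ℕ) (hP : P.natDegree < n) (hQ : Q.natDegree < n)
    (hn : n ≤ (minpoly ℚ α).natDegree * m)
    (h : (X - C α) ^ m ∣ P.map (algebraMap ℚ ℝ) - C α * Q.map (algebraMap ℚ ℝ)) :
    wronskian P Q ≠ 0 := by
  intro hW
  have hg : gcd P Q ≠ 0 := by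
    intro h0
    rw [gcd_eq_zero_iff] at h0
    tauto
  obtain ⟨p, hp⟩ := gcd_dvd_left P Q
  obtain ⟨q, hq⟩ := gcd_dvd_right P Q
  have hcop : IsCoprime p q := by
    have : gcd p q ∣ 1 := by
      have h1 : gcd P Q * gcd p q ∣ gcd P Q :=
        dvd_gcd (by conv_rhs => rw [hp]
                    exact mul_dvd_mul_left _ (gcd_dvd_left p q))
          (by conv_rhs => rw [hq]
              exact mul_dvd_mul_left _ (gcd_dvd_right p q))
      refine (mul_dvd_mul_iff_left hg).1 (by simpa using h1)
    exact (gcd_isUnit_iff p q).1 (isUnit_of_dvd_one this)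
  set g := gcd P Q with hgdef
  have hw : wronskian p q = 0 := by
    have : g ^ 2 * wronskian p q = 0 := by
      rw [← hW, hp, hq]; simp [wronskian]; ring
    rcases mul_eq_zero.1 this with h | h
    · exact absurd h (pow_ne_zero _ hg)
    · exact h
  obtain ⟨hp', hq'⟩ := (hcop.wronskian_eq_zero_iff).1 hw
  have hpc := eq_C_of_derivative_eq_zero hp'
  have hqc := eq_C_of_derivative_eq_zero hq'
  set c1 := p.coeff 0
  set c2 := q.coeff 0
  have hc : (c1 : ℝ) - α * c2 ≠ 0 := by
    intro h0
    by_cases h2 : c2 = 0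
    · have h1 : c1 = 0 := by simpa [h2] using h0
      rw [hpc, h1] at hp
      rw [hqc, h2] at hq
      simp at hp hq
      tauto
    · have hαr : α = algebraMap ℚ ℝ (c1 / c2) := by
        have : (c2 : ℝ) ≠ 0 := by exact_mod_cast h2
        simp; field_simp; linarith
      have := minpoly.eq_X_sub_C (B := ℝ) (c1 / c2 : ℚ)
      rw [← hαr] at this
      rw [this, natDegree_X_sub_C] at hd
      omega
  have hdv : (X - C α) ^ m ∣ g.map (algebraMap ℚ ℝ) := by
    have e : P.map (algebraMap ℚ ℝ) - C α * Q.map (algebraMap ℚ ℝ)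
        = g.map (algebraMap ℚ ℝ) * C ((c1 : ℝ) - α * c2) := by
      rw [hp, hq, hpc, hqc]; simp; ring
    rw [e] at h
    exact (IsUnit.dvd_mul_right (isUnit_C.2 (isUnit_iff_ne_zero.2 hc))).1 h
  have hdv2 := thue_minpoly_pow_dvd α hα m g hdv
  have hle := natDegree_le_of_dvd hdv2 hg
  rw [natDegree_pow, mul_comm] at hle
  rcases hPQ with h0 | h0
  · have : g.natDegree ≤ P.natDegree := natDegree_le_of_dvd (gcd_dvd_left P Q) h0
    omega
  · have : g.natDegree ≤ Q.natDegree := natDegree_le_of_dvd (gcd_dvd_right P Q) h0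
    omega

lemma thue_nonvanish (α : ℝ) (hα : IsIntegral ℚ α) (hd : 2 ≤ (minpoly ℚ α).natDegree)
    (P Q : ℚ[X]) (hPQ : P ≠ 0 ∨ Q ≠ 0) (m n J : ℕ) (hP : P.natDegree < n) (hQ : Q.natDegree < n)
    (hn : n ≤ (minpoly ℚ α).natDegree * m)
    (h : (X - C α) ^ m ∣ P.map (algebraMap ℚ ℝ) - C α * Q.map (algebraMap ℚ ℝ))
    (hJ : 2 * n ≤ (minpoly ℚ α).natDegree * (m - 1) + J) (b c : ℚ) :
    ∃ j < J, (hasseDeriv j (P - C c * Q)).eval b ≠ 0 := by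
  by_contra! hcon
  have hW := thue_wronskian_ne α hα hd P Q hPQ m n hP hQ hn h
  have h1 : (X - C b) ^ (J - 1) ∣ wronskian P Q :=
    thue_dvd_wronskian P Q b c J ((thue_hasse_dvd _ _ _).2 hcon)
  have h2 : (minpoly ℚ α) ^ (m - 1) ∣ wronskian P Q := by
    apply thue_minpoly_pow_dvd α hα
    rw [thue_map_wronskian]
    exact thue_dvd_wronskian _ _ α α m h
  have hcop : IsCoprime (minpoly ℚ α) (X - C b) := by
    rw [(minpoly.irreducible hα).coprime_iff_not_dvd]
    intro hdv
    have := natDegree_le_of_dvd hdv (X_sub_C_ne_zero b)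
    rw [natDegree_X_sub_C] at this
    omega
  have h3 := (hcop.pow (m := m - 1) (n := J - 1)).mul_dvd h2 h1
  have h4 := natDegree_le_of_dvd h3 hW
  rw [natDegree_mul (pow_ne_zero _ (minpoly.ne_zero hα)) (pow_ne_zero _ (X_sub_C_ne_zero b)),
    natDegree_pow, natDegree_pow, natDegree_X_sub_C, mul_comm] at h4
  have h5 := natDegree_wronskian_lt_add hW
  omega
lemma thue_relation (α : ℝ) (hα : IsIntegral ℚ α) :
    ∃ (b : ℤ) (c : ℕ → ℤ), b ≠ 0 ∧
      (b : ℝ) * α ^ (minpoly ℚ α).natDegree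
        = ∑ k ∈ Finset.range (minpoly ℚ α).natDegree, (c k : ℝ) * α ^ k := by
  set μ := minpoly ℚ α with hμ
  obtain ⟨⟨b, hb⟩, hc⟩ := IsLocalization.exist_integer_multiples (nonZeroDivisors ℤ)
    (Finset.range μ.natDegree) (fun k => μ.coeff k)
  have hb0 : b ≠ 0 := nonZeroDivisors.ne_zero hb
  have hc' : ∀ k, ∃ c : ℤ, k ∈ Finset.range μ.natDegree → (c : ℚ) = b * μ.coeff k := by
    intro k
    by_cases hk : k ∈ Finset.range μ.natDegree
    · obtain ⟨c, hc⟩ := hc k hk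
      refine ⟨c, fun _ => ?_⟩
      simpa [Submonoid.smul_def] using hc
    · exact ⟨0, fun h => absurd h hk⟩
  choose c hcc using hc'
  refine ⟨b, fun k => - c k, hb0, ?_⟩
  have h0 : aeval α μ = 0 := minpoly.aeval ℚ α
  rw [aeval_eq_sum_range, Finset.sum_range_succ] at h0
  have hlead : μ.coeff μ.natDegree = 1 := (minpoly.monic hα)
  rw [hlead, one_smul] at h0
  have h1 : α ^ μ.natDegree = - ∑ i ∈ Finset.range μ.natDegree, μ.coeff i • α ^ i := by linarith
  rw [h1, mul_neg, Finset.mul_sum, ← Finset.sum_neg_distrib]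
  refine Finset.sum_congr rfl fun k hk => ?_
  have h2 : ((c k : ℤ) : ℝ) = (b : ℝ) * (μ.coeff k : ℝ) := by
    exact_mod_cast congrArg (fun x : ℚ => (x : ℝ)) (hcc k hk)
  push_cast
  rw [h2, Rat.smul_def]; ring

lemma thue_powers (α : ℝ) (e : ℕ) (b : ℤ) (c : ℕ → ℤ) (hb : b ≠ 0)
    (h : (b : ℝ) * α ^ (e + 1) = ∑ k ∈ Finset.range (e + 1), (c k : ℝ) * α ^ k) :
    ∃ B : ℕ, 1 ≤ B ∧ ∀ N : ℕ, ∀ i ≤ N, ∃ v : ℕ → ℤ,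
      (b : ℝ) ^ N * α ^ i = ∑ k ∈ Finset.range (e + 1), (v k : ℝ) * α ^ k ∧
      ∀ k ∈ Finset.range (e + 1), |v k| ≤ (B : ℤ) ^ N := by
  have hb1 : 1 ≤ |b| := Int.one_le_abs hb
  set B : ℤ := |b| + ∑ k ∈ Finset.range (e + 1), |c k| with hB
  have hcB : ∀ k ∈ Finset.range (e + 1), |b| + |c k| ≤ B := by
    intro k hk
    have := Finset.single_le_sum (f := fun k => |c k|) (fun i _ => abs_nonneg (c i)) hk
    linarith
  have hbB : |b| ≤ B := by
    have := Finset.sum_nonneg (s := Finset.range (e + 1)) (f := fun k => |c k|)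
      (fun i _ => abs_nonneg (c i))
    linarith
  have hB1 : 1 ≤ B := hb1.trans hbB
  refine ⟨B.toNat, by omega, ?_⟩
  have hBn : ((B.toNat : ℕ) : ℤ) = B := Int.toNat_of_nonneg (by omega)
  rw [hBn]
  have key : ∀ i : ℕ, ∃ v : ℕ → ℤ,
      (b : ℝ) ^ i * α ^ i = ∑ k ∈ Finset.range (e + 1), (v k : ℝ) * α ^ k ∧
      ∀ k ∈ Finset.range (e + 1), |v k| ≤ B ^ i := by
    intro i
    induction i with
    | zero =>
      refine ⟨fun k => if k = 0 then 1 else 0, ?_, ?_⟩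
      · rw [Finset.sum_range_succ']; simp
      · intro k _; dsimp only; split_ifs <;> simp
    | succ i ih =>
      obtain ⟨v, hv, hvB⟩ := ih
      refine ⟨fun k => (if k = 0 then 0 else b * v (k - 1)) + v e * c k, ?_, ?_⟩
      · have : (b : ℝ) ^ (i + 1) * α ^ (i + 1)
            = ∑ k ∈ Finset.range e, (b * v k : ℝ) * α ^ (k + 1)
              + v e * ∑ k ∈ Finset.range (e + 1), (c k : ℝ) * α ^ k := by
          rw [pow_succ, pow_succ α, show (b : ℝ) ^ i * b * (α ^ i * α)
            = b * α * ((b : ℝ) ^ i * α ^ i) by ring, hv, ← h, Finset.sum_range_succ, mul_add,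
            Finset.mul_sum]
          congr 1
          · exact Finset.sum_congr rfl fun k _ => by ring
          · ring
        rw [this]
        push_cast
        simp only [add_mul]
        rw [Finset.sum_add_distrib, Finset.mul_sum]
        congr 1
        · rw [Finset.sum_range_succ']; simp
        · exact Finset.sum_congr rfl fun k _ => by ring
      · intro k hk
        have hve := hvB e (by simp)
        have hBi : 0 ≤ B ^ i := by positivity
        have h1 : |if k = 0 then 0 else b * v (k - 1)| ≤ |b| * B ^ i := by
          split_ifs with h0
          · simp; positivity
          · rw [abs_mul]
            have := hvB (k - 1) (by simp at hk ⊢; omega)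
            gcongr
        have h2 : |v e * c k| ≤ |c k| * B ^ i := by
          rw [abs_mul, mul_comm]; gcongr
        calc _ ≤ _ := abs_add_le _ _
          _ ≤ (|b| + |c k|) * B ^ i := by linarith
          _ ≤ B * B ^ i := by gcongr; exact hcB k hk
          _ = _ := by ring
  intro N i hi
  obtain ⟨v, hv, hvB⟩ := key i
  refine ⟨fun k => b ^ (N - i) * v k, ?_, ?_⟩
  · have : (b : ℝ) ^ N = b ^ (N - i) * b ^ i := by rw [← pow_add]; congr 1; omega
    rw [this, mul_assoc, hv, Finset.mul_sum]
    push_cast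
    exact Finset.sum_congr rfl fun k _ => by ring
  · intro k hk
    have : B ^ N = B ^ (N - i) * B ^ i := by rw [← pow_add]; congr 1; omega
    rw [this, abs_mul, abs_pow]
    have := hvB k hk
    gcongr

lemma thue_poly_of_vec (n : ℕ) (u : Fin n → ℤ) (H : ℝ) (hH : 0 ≤ H) (hu : ∀ i, |(u i : ℝ)| ≤ H)
    (hn : 0 < n) :
    ∃ P : ℤ[X], (∀ i : Fin n, P.coeff i = u i) ∧ P.natDegree < n ∧
      (∀ i, |((P.coeff i : ℤ) : ℝ)| ≤ H) ∧
      ∀ (j : ℕ) (x : ℝ), (hasseDeriv j (P.map (Int.castRingHom ℝ))).eval x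
        = ∑ i : Fin n, (u i : ℝ) * ((i : ℕ).choose j : ℝ) * x ^ ((i : ℕ) - j) := by
  set P : ℤ[X] := ∑ i : Fin n, monomial (i : ℕ) (u i) with hP
  have hc : ∀ i : Fin n, P.coeff i = u i := by
    intro i
    rw [hP, finsetSum_coeff]
    simp only [coeff_monomial]
    rw [Finset.sum_eq_single i]
    · simp
    · intro k _ hk
      rw [if_neg]
      intro h; exact hk (Fin.ext h)
    · simp
  have hdeg : P.natDegree < n := by
    have : P.natDegree ≤ n - 1 := by
      refine natDegree_sum_le_of_forall_le _ _ fun i _ => ?_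
      exact (natDegree_monomial_le _).trans (by omega)
    omega
  refine ⟨P, hc, hdeg, ?_, ?_⟩
  · intro i
    by_cases hi : i < n
    · rw [hc ⟨i, hi⟩]; exact hu _
    · rw [coeff_eq_zero_of_natDegree_lt (by omega)]; simpa using hH
  · intro j x
    rw [hP, Polynomial.map_sum, map_sum, eval_finsetSum]
    refine Finset.sum_congr rfl fun i _ => ?_
    rw [map_monomial, hasseDeriv_monomial, eval_monomial]
    simp only [eq_intCast]; ring

attribute [local instance] Matrix.seminormedAddCommGroup in
lemma thue_siegel (α : ℝ) (hα : IsIntegral ℚ α) (d : ℕ) (hd : (minpoly ℚ α).natDegree = d)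
    (hd1 : 1 ≤ d) (K : ℕ) (hK : 1 ≤ K) :
    ∃ C : ℝ, 1 ≤ C ∧ ∀ s : ℕ, 1 ≤ s → ∃ P Q : ℤ[X], (P ≠ 0 ∨ Q ≠ 0) ∧
      P.natDegree < (d * K + 1) * s ∧ Q.natDegree < (d * K + 1) * s ∧
      (∀ i, |((P.coeff i : ℤ) : ℝ)| ≤ C ^ s) ∧ (∀ i, |((Q.coeff i : ℤ) : ℝ)| ≤ C ^ s) ∧
      ∀ j < 2 * K * s, (hasseDeriv j (P.map (Int.castRingHom ℝ)
        - Polynomial.C α * Q.map (Int.castRingHom ℝ))).eval α = 0 := by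
  obtain ⟨b, c, hb, hrel⟩ := thue_relation α hα
  rw [hd] at hrel
  obtain ⟨e, rfl⟩ : ∃ e, d = e + 1 := ⟨d - 1, by omega⟩
  obtain ⟨B, hB1, hpow⟩ := thue_powers α e b c hb hrel
  set d := e + 1 with hdef
  have hB1' : (1 : ℝ) ≤ B := by exact_mod_cast hB1
  refine ⟨((4 * B : ℝ) ^ (d * K + 1)) ^ (d * K), one_le_pow₀ (one_le_pow₀ (by linarith)), ?_⟩
  intro s hs
  set n := (d * K + 1) * s with hn
  set m := 2 * K * s with hm
  have hn1 : 1 ≤ n := Nat.mul_pos (by omega) hs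
  have hw : ∀ i, ∃ v : ℕ → ℤ, i ≤ n →
      ((b : ℝ) ^ n * α ^ i = ∑ k ∈ Finset.range d, (v k : ℝ) * α ^ k ∧
      ∀ k ∈ Finset.range d, |v k| ≤ (B : ℤ) ^ n) := by
    intro i
    by_cases hi : i ≤ n
    · obtain ⟨v, hv⟩ := hpow n i hi
      exact ⟨v, fun _ => hv⟩
    · exact ⟨0, fun h => absurd h hi⟩
  choose w hw using hw
  let A : Matrix (Fin m × Fin d) (Fin n ⊕ Fin n) ℤ := fun jk i =>
    Sum.elim (fun i : Fin n => ((i : ℕ).choose jk.1 : ℤ) * w ((i : ℕ) - jk.1) jk.2)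
      (fun i : Fin n => -(((i : ℕ).choose jk.1 : ℤ) * w ((i : ℕ) - jk.1 + 1) jk.2)) i
  have hchoose : ∀ i j : ℕ, i < n → ((i.choose j : ℕ) : ℤ) ≤ 2 ^ n := by
    intro i j hi
    have h1 : i.choose j ≤ 2 ^ n := (Nat.choose_le_two_pow i j).trans
      (Nat.pow_le_pow_right (by norm_num) hi.le)
    exact_mod_cast h1
  have hentry : ∀ (i j l : ℕ) (k : Fin d), i < n → l ≤ n →
      |((i.choose j : ℕ) : ℤ) * w l k| ≤ (2 * B : ℤ) ^ n := by
    intro i j l k hi hl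
    rw [abs_mul, mul_pow, Nat.abs_cast]
    have := (hw l hl).2 k (by simp)
    gcongr
    exact hchoose i j hi
  have hA : ‖A‖ ≤ (2 * B : ℝ) ^ n := by
    rw [Matrix.norm_le_iff (by positivity)]
    rintro ⟨j, k⟩ (i | i)
    · have := hentry i j (i - j) k i.2 (by omega)
      rw [Int.norm_eq_abs]
      exact_mod_cast this
    · have := hentry i j (i - j + 1) k i.2 (by omega)
      rw [Int.norm_eq_abs, ← Int.cast_abs]
      simp only [A, Sum.elim_inr, abs_neg]
      exact_mod_cast this
  have hcr : Fintype.card (Fin m × Fin d) = m * d := by simp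
  have hcc : Fintype.card (Fin n ⊕ Fin n) = 2 * n := by simp; ring
  have hnm : 2 * n = m * d + 2 * s := by rw [hn, hm]; ring
  have hmd : 0 < m * d := by rw [hm, hdef]; positivity
  obtain ⟨t, ht0, hAt, htn⟩ := Int.Matrix.exists_ne_zero_int_vec_norm_le A
    (by rw [hcr, hcc]; omega) (by rw [hcr]; exact hmd)
  rw [hcr, hcc] at htn
  have hexp : ((m * d : ℕ) : ℝ) / (((2 * n : ℕ) : ℝ) - ((m * d : ℕ) : ℝ)) = ((d * K : ℕ) : ℝ) := by
    rw [hnm]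
    have : (s : ℝ) ≠ 0 := by positivity
    push_cast [hm]
    field_simp
    ring
  rw [hexp, Real.rpow_natCast] at htn
  have hH : ‖t‖ ≤ (((4 * B : ℝ) ^ (d * K + 1)) ^ (d * K)) ^ s := by
    refine htn.trans ?_
    rw [← pow_mul, ← pow_mul, show (d * K + 1) * (d * K * s) = n * (d * K) by rw [hn]; ring,
      pow_mul (4 * (B : ℝ)) n]
    gcongr
    have h2n : 2 * n ≤ 2 ^ n := by
      obtain ⟨r, hr⟩ : ∃ r, n = r + 1 := ⟨n - 1, by omega⟩
      rw [hr, pow_succ, mul_comm]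
      exact Nat.mul_le_mul_right _ (Nat.lt_two_pow_self)
    have h2n' : ((2 * n : ℕ) : ℝ) ≤ 2 ^ n := by exact_mod_cast h2n
    calc ((2 * n : ℕ) : ℝ) * max 1 ‖A‖ ≤ 2 ^ n * (2 * B : ℝ) ^ n := by
          gcongr
          exact max_le (one_le_pow₀ (by linarith)) hA
      _ = (4 * B : ℝ) ^ n := by rw [← mul_pow]; congr 1; ring
  set H := (((4 * B : ℝ) ^ (d * K + 1)) ^ (d * K)) ^ s with hHdef
  have htb : ∀ x, |(t x : ℝ)| ≤ H := by
    intro x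
    have := (norm_le_pi_norm t x).trans hH
    rwa [Int.norm_eq_abs] at this
  have hH0 : 0 ≤ H := by positivity
  obtain ⟨P, hPc, hPd, hPH, hPe⟩ := thue_poly_of_vec n (fun i => t (Sum.inl i)) H hH0
    (fun i => htb _) hn1
  obtain ⟨Q, hQc, hQd, hQH, hQe⟩ := thue_poly_of_vec n (fun i => t (Sum.inr i)) H hH0
    (fun i => htb _) hn1
  refine ⟨P, Q, ?_, hPd, hQd, hPH, hQH, ?_⟩
  · by_contra! h
    apply ht0
    funext x
    rcases x with i | i
    · rw [← hPc, h.1]; simp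
    · rw [← hQc, h.2]; simp
  · intro j hj
    have hbn : (b : ℝ) ^ n ≠ 0 := pow_ne_zero _ (by exact_mod_cast hb)
    have hz : (b : ℝ) ^ n * (hasseDeriv j (P.map (Int.castRingHom ℝ)
        - Polynomial.C α * Q.map (Int.castRingHom ℝ))).eval α = 0 := by
      rw [map_sub, ← smul_eq_C_mul, map_smul, eval_sub, eval_smul, hPe, hQe, smul_eq_mul]
      have hrow : ∀ k : Fin d, ∑ x, (A (⟨j, hj⟩, k) x : ℝ) * (t x : ℝ) = 0 := by
        intro k
        have := congrFun hAt (⟨j, hj⟩, k)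
        simp only [Matrix.mulVec, dotProduct, Pi.zero_apply] at this
        exact_mod_cast this
      calc _ = ∑ k : Fin d, (∑ x, (A (⟨j, hj⟩, k) x : ℝ) * (t x : ℝ)) * α ^ (k : ℕ) := by
            simp only [Fintype.sum_sum_type, A, Sum.elim_inl, Sum.elim_inr, add_mul,
              Finset.sum_add_distrib, Finset.sum_mul]
            rw [mul_sub, sub_eq_add_neg]
            congr 1
            · rw [Finset.sum_comm, Finset.mul_sum]
              refine Finset.sum_congr rfl fun i _ => ?_
              have h1 := (hw ((i : ℕ) - j) (by omega)).1
              rw [Finset.sum_range] at h1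
              calc _ = (t (Sum.inl i) : ℝ) * ((i : ℕ).choose j : ℝ)
                    * ((b : ℝ) ^ n * α ^ ((i : ℕ) - j)) := by ring
                _ = _ := by
                  rw [h1, Finset.mul_sum]
                  refine Finset.sum_congr rfl fun k _ => ?_
                  push_cast; ring
            · rw [Finset.sum_comm, Finset.mul_sum, Finset.mul_sum, ← Finset.sum_neg_distrib]
              refine Finset.sum_congr rfl fun i _ => ?_
              have h1 := (hw ((i : ℕ) - j + 1) (by omega)).1
              rw [Finset.sum_range] at h1
              calc _ = -((t (Sum.inr i) : ℝ) * ((i : ℕ).choose j : ℝ))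
                    * ((b : ℝ) ^ n * α ^ ((i : ℕ) - j + 1)) := by ring
                _ = _ := by
                  rw [h1, Finset.mul_sum]
                  refine Finset.sum_congr rfl fun k _ => ?_
                  push_cast; ring
        _ = 0 := by simp [hrow]
    exact (mul_eq_zero.1 hz).resolve_left hbn

lemma thue_map_hasseDeriv {R S : Type*} [CommRing R] [CommRing S] (f : R →+* S) (P : R[X])
    (j : ℕ) : (hasseDeriv j P).map f = hasseDeriv j (P.map f) := by
  ext i
  simp [hasseDeriv_coeff]

lemma thue_hasse_sum (T : ℝ[X]) (n : ℕ) (h : T.natDegree < n) (j : ℕ) (x : ℝ) :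
    (hasseDeriv j T).eval x
      = ∑ i ∈ Finset.range n, T.coeff i * ((i.choose j : ℕ) : ℝ) * x ^ (i - j) := by
  conv_lhs => rw [T.as_sum_range' n h]
  rw [map_sum, eval_finsetSum]
  refine Finset.sum_congr rfl fun i _ => ?_
  rw [hasseDeriv_monomial, eval_monomial]
  ring

lemma thue_choose_le (n i j : ℕ) (hi : i < n) : ((i.choose j : ℕ) : ℝ) ≤ 2 ^ n := by
  have h1 : i.choose j ≤ 2 ^ n := (Nat.choose_le_two_pow i j).trans
    (Nat.pow_le_pow_right (by norm_num) hi.le)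
  exact_mod_cast h1

lemma thue_four_pow (n : ℕ) : (n : ℝ) * 2 ^ n ≤ 4 ^ n := by
  have h1 : (n : ℝ) ≤ 2 ^ n := by exact_mod_cast (Nat.lt_two_pow_self (n := n)).le
  calc (n : ℝ) * 2 ^ n ≤ 2 ^ n * 2 ^ n := by gcongr
    _ = 4 ^ n := by rw [← mul_pow]; norm_num

lemma thue_bound_one (T : ℝ[X]) (n : ℕ) (h : T.natDegree < n) (H : ℝ)
    (hH : ∀ i, |T.coeff i| ≤ H) (j : ℕ) (x : ℝ) :
    |(hasseDeriv j T).eval x| ≤ 4 ^ n * H * (1 + |x|) ^ n := by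
  have hH0 : 0 ≤ H := (abs_nonneg _).trans (hH 0)
  rw [thue_hasse_sum T n h]
  calc _ ≤ ∑ i ∈ Finset.range n, |T.coeff i * ((i.choose j : ℕ) : ℝ) * x ^ (i - j)| :=
        Finset.abs_sum_le_sum_abs _ _
    _ ≤ ∑ i ∈ Finset.range n, H * 2 ^ n * (1 + |x|) ^ n := by
        refine Finset.sum_le_sum fun i hi => ?_
        rw [abs_mul, abs_mul, abs_pow, Nat.abs_cast]
        have hi' := Finset.mem_range.1 hi
        have h1 : |x| ^ (i - j) ≤ (1 + |x|) ^ n :=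
          calc |x| ^ (i - j) ≤ (1 + |x|) ^ (i - j) := by gcongr; linarith
            _ ≤ (1 + |x|) ^ n := by gcongr; · linarith [abs_nonneg x]
                                    · omega
        gcongr
        · exact hH i
        · exact thue_choose_le n i j hi'
    _ = (n * 2 ^ n) * H * (1 + |x|) ^ n := by simp; ring
    _ ≤ _ := by gcongr; exact thue_four_pow n

lemma thue_bound_two (T : ℝ[X]) (n : ℕ) (h : T.natDegree < n) (H : ℝ)
    (hH : ∀ i, |T.coeff i| ≤ H) (m j : ℕ) (hT : ∀ i < m, T.coeff i = 0)
    (x : ℝ) (hx : |x| ≤ 1) :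
    |(hasseDeriv j T).eval x| ≤ 4 ^ n * H * |x| ^ (m - j) := by
  have hH0 : 0 ≤ H := (abs_nonneg _).trans (hH 0)
  rw [thue_hasse_sum T n h]
  calc _ ≤ ∑ i ∈ Finset.range n, |T.coeff i * ((i.choose j : ℕ) : ℝ) * x ^ (i - j)| :=
        Finset.abs_sum_le_sum_abs _ _
    _ ≤ ∑ i ∈ Finset.range n, H * 2 ^ n * |x| ^ (m - j) := by
        refine Finset.sum_le_sum fun i hi => ?_
        by_cases him : i < m
        · rw [hT i him]; simp; positivity
        rw [abs_mul, abs_mul, abs_pow, Nat.abs_cast]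
        have hi' := Finset.mem_range.1 hi
        have h1 : |x| ^ (i - j) ≤ |x| ^ (m - j) :=
          pow_le_pow_of_le_one (abs_nonneg x) hx (by omega)
        gcongr
        · exact hH i
        · exact thue_choose_le n i j hi'
    _ = (n * 2 ^ n) * H * |x| ^ (m - j) := by simp; ring
    _ ≤ _ := by gcongr; exact thue_four_pow n

lemma thue_bound_three (α β : ℝ) (G : ℝ[X]) (n : ℕ) (h : G.natDegree < n) (H : ℝ)
    (hH : ∀ i, |G.coeff i| ≤ H) (m j : ℕ) (hG : ∀ i < m, (hasseDeriv i G).eval α = 0)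
    (hx : |β - α| ≤ 1) :
    |(hasseDeriv j G).eval β| ≤ 4 ^ n * (4 ^ n * H * (1 + |α|) ^ n) * |β - α| ^ (m - j) := by
  have e : (hasseDeriv j G).eval β = (hasseDeriv j (taylor α G)).eval (β - α) := by
    rw [← taylor_coeff, ← taylor_coeff, taylor_taylor]; simp
  rw [e]
  refine thue_bound_two _ n (by rwa [natDegree_taylor]) _ ?_ m j ?_ _ hx
  · intro i
    rw [taylor_coeff]
    exact thue_bound_one G n h H hH i α
  · intro i hi
    rw [taylor_coeff]; exact hG i hi

lemma thue_upper (α β₁ β₂ : ℝ) (P Q : ℤ[X]) (n : ℕ) (hP : P.natDegree < n) (hQ : Q.natDegree < n)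
    (H : ℝ) (hPH : ∀ i, |((P.coeff i : ℤ) : ℝ)| ≤ H) (hQH : ∀ i, |((Q.coeff i : ℤ) : ℝ)| ≤ H)
    (m j : ℕ) (hG : ∀ i < m, (hasseDeriv i (P.map (Int.castRingHom ℝ)
        - C α * Q.map (Int.castRingHom ℝ))).eval α = 0) (hx : |β₁ - α| ≤ 1) :
    |(hasseDeriv j (P.map (Int.castRingHom ℝ)
        - C β₂ * Q.map (Int.castRingHom ℝ))).eval β₁|
      ≤ (16 * (2 + |α|) ^ 2) ^ n * H * (|β₁ - α| ^ (m - j) + |β₂ - α|) := by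
  have hH0 : 0 ≤ H := (abs_nonneg _).trans (hPH 0)
  have hα0 := abs_nonneg α
  set p := P.map (Int.castRingHom ℝ) with hp
  set q := Q.map (Int.castRingHom ℝ) with hq
  have hpd : p.natDegree < n := (natDegree_map_le).trans_lt hP
  have hqd : q.natDegree < n := (natDegree_map_le).trans_lt hQ
  have hpc : ∀ i, |p.coeff i| ≤ H := by intro i; rw [hp, coeff_map]; exact hPH i
  have hqc : ∀ i, |q.coeff i| ≤ H := by intro i; rw [hq, coeff_map]; exact hQH i
  have hGd : (p - C α * q).natDegree < n := by
    refine (natDegree_sub_le _ _).trans_lt (max_lt hpd ?_)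
    exact (natDegree_C_mul_le _ _).trans_lt hqd
  have hGc : ∀ i, |(p - C α * q).coeff i| ≤ H * (1 + |α|) := by
    intro i
    rw [coeff_sub, coeff_C_mul]
    calc _ ≤ |p.coeff i| + |α * q.coeff i| := abs_sub _ _
      _ = |p.coeff i| + |α| * |q.coeff i| := by rw [abs_mul]
      _ ≤ H + |α| * H := by gcongr; exacts [hpc i, hqc i]
      _ = _ := by ring
  have b1 := thue_bound_three α β₁ (p - C α * q) n hGd _ hGc m j hG hx
  have b2 := thue_bound_one q n hqd H hqc j β₁
  have e : (hasseDeriv j (p - C β₂ * q)).eval β₁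
      = (hasseDeriv j (p - C α * q)).eval β₁ - (β₂ - α) * (hasseDeriv j q).eval β₁ := by
    simp only [← smul_eq_C_mul, map_sub, map_smul, eval_sub, eval_smul, smul_eq_mul]; ring
  have hβ : |β₁| ≤ 1 + |α| := by
    calc |β₁| = |(β₁ - α) + α| := by ring_nf
      _ ≤ |β₁ - α| + |α| := abs_add_le _ _
      _ ≤ _ := by linarith
  have c1 : 4 ^ n * (4 ^ n * (H * (1 + |α|)) * (1 + |α|) ^ n) ≤ (16 * (2 + |α|) ^ 2) ^ n * H := by
    have h1 : 1 + |α| ≤ (2 + |α|) ^ n :=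
      calc 1 + |α| ≤ (2 + |α|) ^ 1 := by linarith
        _ ≤ (2 + |α|) ^ n := by gcongr; · linarith
                                · omega
    calc 4 ^ n * (4 ^ n * (H * (1 + |α|)) * (1 + |α|) ^ n)
        ≤ 4 ^ n * (4 ^ n * (H * (2 + |α|) ^ n) * (2 + |α|) ^ n) := by gcongr; norm_num
      _ = ((4 * 4) * (2 + |α|) ^ 2) ^ n * H := by rw [mul_pow, mul_pow, ← pow_mul]; ring
      _ = _ := by norm_num
  have c2 : 4 ^ n * H * (1 + |β₁|) ^ n ≤ (16 * (2 + |α|) ^ 2) ^ n * H := by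
    calc 4 ^ n * H * (1 + |β₁|) ^ n = (4 * (1 + |β₁|)) ^ n * H := by rw [mul_pow]; ring
      _ ≤ _ := by gcongr <;> nlinarith
  rw [e]
  calc _ ≤ |(hasseDeriv j (p - C α * q)).eval β₁| + |(β₂ - α) * (hasseDeriv j q).eval β₁| :=
        abs_sub _ _
    _ ≤ (16 * (2 + |α|) ^ 2) ^ n * H * |β₁ - α| ^ (m - j)
        + |β₂ - α| * ((16 * (2 + |α|) ^ 2) ^ n * H) := by
        rw [abs_mul]
        refine add_le_add (b1.trans ?_) ?_
        · gcongr
        · gcongr; exact b2.trans c2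
    _ = _ := by ring

lemma thue_lower (P Q : ℤ[X]) (n : ℕ) (hP : P.natDegree < n) (hQ : Q.natDegree < n)
    (j : ℕ) (p₁ q₁ p₂ q₂ : ℤ) (h₁ : 0 < q₁) (h₂ : 0 < q₂)
    (hne : (hasseDeriv j (P.map (Int.castRingHom ℚ)
        - C ((p₂ : ℚ) / q₂) * Q.map (Int.castRingHom ℚ))).eval ((p₁ : ℚ) / q₁) ≠ 0) :
    1 ≤ (q₁ : ℝ) ^ n * q₂ * |(hasseDeriv j (P.map (Int.castRingHom ℝ)
        - C ((p₂ : ℝ) / q₂) * Q.map (Int.castRingHom ℝ))).eval ((p₁ : ℝ) / q₁)| := by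
  set T : ℤ[X] := hasseDeriv j (C q₂ * P - C p₂ * Q) with hT
  have hTd : T.natDegree ≤ n := by
    refine (natDegree_hasseDeriv_le _ _).trans ((Nat.sub_le _ _).trans ?_)
    refine (natDegree_sub_le _ _).trans (max_le ?_ ?_)
    · exact (natDegree_C_mul_le _ _).trans hP.le
    · exact (natDegree_C_mul_le _ _).trans hQ.le
  have hq₂ : (q₂ : ℚ) ≠ 0 := by exact_mod_cast h₂.ne'
  have hq₂' : (q₂ : ℝ) ≠ 0 := by exact_mod_cast h₂.ne'
  have eQ : (T.map (Int.castRingHom ℚ)) = C (q₂ : ℚ) * hasseDeriv j (P.map (Int.castRingHom ℚ)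
        - C ((p₂ : ℚ) / q₂) * Q.map (Int.castRingHom ℚ)) := by
    rw [hT, thue_map_hasseDeriv, ← smul_eq_C_mul (q₂ : ℚ), ← map_smul, smul_eq_C_mul]
    congr 1
    rw [mul_sub, ← mul_assoc, ← C_mul, mul_div_cancel₀ _ hq₂]
    simp
  have eR : (T.map (Int.castRingHom ℝ)) = C (q₂ : ℝ) * hasseDeriv j (P.map (Int.castRingHom ℝ)
        - C ((p₂ : ℝ) / q₂) * Q.map (Int.castRingHom ℝ)) := by
    rw [hT, thue_map_hasseDeriv, ← smul_eq_C_mul (q₂ : ℝ), ← map_smul, smul_eq_C_mul]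
    congr 1
    rw [mul_sub, ← mul_assoc, ← C_mul, mul_div_cancel₀ _ hq₂']
    simp
  have hne' : (T.map (Int.castRingHom ℝ)).eval ((p₁ : ℝ) / q₁) ≠ 0 := by
    have e : (T.map (Int.castRingHom ℝ)).eval ((p₁ : ℝ) / q₁)
        = (((T.map (Int.castRingHom ℚ)).eval ((p₁ : ℚ) / q₁) : ℚ) : ℝ) := by
      have : T.map (Int.castRingHom ℝ) = (T.map (Int.castRingHom ℚ)).map (Rat.castHom ℝ) := by
        rw [Polynomial.map_map]; congr 1
      rw [this, show ((p₁ : ℝ) / q₁) = Rat.castHom ℝ ((p₁ : ℚ) / q₁) by simp, eval_map_apply]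
      rfl
    rw [e, eQ, eval_mul, eval_C]
    exact_mod_cast mul_ne_zero hq₂ hne
  have key := one_le_pow_mul_abs_eval_div (K := ℝ) (f := T) (a := p₁) (b := q₁) h₁ hne'
  have e2 : (T.map (algebraMap ℤ ℝ)) = T.map (Int.castRingHom ℝ) := rfl
  rw [e2, eR, eval_mul, eval_C, abs_mul, abs_of_pos (by exact_mod_cast h₂ : (0 : ℝ) < q₂)] at key
  refine key.trans ?_
  rw [← mul_assoc]
  have : (1 : ℝ) ≤ q₁ := by exact_mod_cast h₁
  have h0 : (0 : ℝ) < q₂ := by exact_mod_cast h₂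
  gcongr

lemma thue_numeric (C x y ρ δ₁ δ₂ : ℝ) (d K s j : ℕ) (hC : 1 ≤ C) (hx : 4 * C ≤ x)
    (hρ : 0 < ρ) (hs : 1 ≤ s) (hK : 2 * ρ + 5 ≤ K * (2 * ρ - d))
    (hsb : 2 * K + (1 + ρ) * d ≤ (s : ℝ)) (hj : j ≤ 2 * s + d) (hjm : j ≤ 2 * K * s)
    (hy1 : x ^ (2 * K * s) ≤ y) (hy2 : y ≤ x ^ (2 * K * (s + 1)))
    (h10 : 0 ≤ δ₁) (h1 : δ₁ ≤ x ^ (-(1 + ρ))) (h2 : δ₂ ≤ y ^ (-(1 + ρ))) :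
    x ^ ((d * K + 1) * s) * y * (C ^ s * (δ₁ ^ (2 * K * s - j) + δ₂)) ≤ 1 / 2 := by
  have hx1 : 1 ≤ x := by linarith
  have hx0 : 0 < x := by linarith
  have hy0 : 0 < y := lt_of_lt_of_le (by positivity) hy1
  have hs1 : (1 : ℝ) ≤ s := by exact_mod_cast hs
  have hjr : (j : ℝ) ≤ 2 * s + d := by exact_mod_cast hj
  have base : C ^ s * x ^ (-(s : ℝ)) ≤ 1 / 4 := by
    rw [Real.rpow_neg hx0.le, Real.rpow_natCast, ← div_eq_mul_inv, ← div_pow]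
    have h : C / x ≤ 1 / 4 := by rw [div_le_iff₀ hx0]; linarith
    have h0 : 0 ≤ C / x := by positivity
    calc (C / x) ^ s ≤ (C / x) ^ 1 := pow_le_pow_of_le_one h0 (by linarith) hs
      _ ≤ 1 / 4 := by simpa using h
  have e0 : x ^ ((d * K + 1) * s) = x ^ (((d : ℝ) * K + 1) * s) := by
    rw [← Real.rpow_natCast]; push_cast; rfl
  have t1 : x ^ ((d * K + 1) * s) * y * δ₁ ^ (2 * K * s - j) ≤ x ^ (-(s : ℝ)) := by
    have a1 : δ₁ ^ (2 * K * s - j) ≤ x ^ (-(1 + ρ) * (2 * K * s - j)) := by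
      calc δ₁ ^ (2 * K * s - j) ≤ (x ^ (-(1 + ρ))) ^ (2 * K * s - j) := by gcongr
        _ = _ := by
          rw [← Real.rpow_natCast, ← Real.rpow_mul hx0.le, Nat.cast_sub hjm]; push_cast; rfl
    have a2 : y ≤ x ^ (2 * (K : ℝ) * (s + 1)) := by
      refine hy2.trans (le_of_eq ?_)
      rw [← Real.rpow_natCast]; push_cast; rfl
    calc _ ≤ x ^ (((d : ℝ) * K + 1) * s) * x ^ (2 * (K : ℝ) * (s + 1))
          * x ^ (-(1 + ρ) * (2 * K * s - j)) := by rw [e0]; gcongr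
      _ = x ^ (((d : ℝ) * K + 1) * s + 2 * (K : ℝ) * (s + 1) + -(1 + ρ) * (2 * K * s - j)) := by
          rw [Real.rpow_add hx0, Real.rpow_add hx0]
      _ ≤ x ^ (-(s : ℝ)) := by
          apply Real.rpow_le_rpow_of_exponent_le hx1
          have q1 := mul_le_mul_of_nonneg_right hK (by linarith : (0 : ℝ) ≤ s)
          have q2 := mul_le_mul_of_nonneg_left hjr (by linarith : (0 : ℝ) ≤ 1 + ρ)
          nlinarith
  have t2 : x ^ ((d * K + 1) * s) * y * δ₂ ≤ x ^ (-(s : ℝ)) := by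
    have a1 : y * δ₂ ≤ x ^ (-(2 * K * s * ρ)) := by
      calc y * δ₂ ≤ y * y ^ (-(1 + ρ)) := by gcongr
        _ = y ^ (-ρ) := by
          nth_rewrite 1 [← Real.rpow_one y]
          rw [← Real.rpow_add hy0]; congr 1; ring
        _ ≤ (x ^ (2 * K * s)) ^ (-ρ) :=
          Real.rpow_le_rpow_of_nonpos (by positivity) hy1 (by linarith)
        _ = _ := by
          rw [← Real.rpow_natCast, ← Real.rpow_mul hx0.le]; push_cast; congr 1; ring
    calc _ = x ^ ((d * K + 1) * s) * (y * δ₂) := by ring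
      _ ≤ x ^ (((d : ℝ) * K + 1) * s) * x ^ (-(2 * K * s * ρ)) := by rw [e0]; gcongr
      _ = x ^ (((d : ℝ) * K + 1) * s + -(2 * K * s * ρ)) := by rw [Real.rpow_add hx0]
      _ ≤ x ^ (-(s : ℝ)) := by
          apply Real.rpow_le_rpow_of_exponent_le hx1
          have q1 := mul_le_mul_of_nonneg_right hK (by linarith : (0 : ℝ) ≤ s)
          nlinarith
  have hCs : 0 < C ^ s := by positivity
  calc _ = C ^ s * (x ^ ((d * K + 1) * s) * y * δ₁ ^ (2 * K * s - j))
        + C ^ s * (x ^ ((d * K + 1) * s) * y * δ₂) := by ring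
    _ ≤ C ^ s * x ^ (-(s : ℝ)) + C ^ s * x ^ (-(s : ℝ)) := by gcongr
    _ ≤ 1 / 2 := by linarith

lemma thue_good (α ρ : ℝ) (p q : ℤ) (hq : 1 ≤ q)
    (h : (q : ℝ) ^ ρ * |(q : ℝ) * α - p| ≤ 1) :
    |(p : ℝ) / q - α| ≤ (q : ℝ) ^ (-(1 + ρ)) := by
  have hq0 : (0 : ℝ) < q := by exact_mod_cast hq
  have e : |(p : ℝ) / q - α| = |(q : ℝ) * α - p| / q := by
    rw [abs_sub_comm, ← abs_of_pos hq0, abs_of_pos hq0]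
    nth_rewrite 3 [← abs_of_pos hq0]
    rw [← abs_div]; congr 1; field_simp
  rw [e, Real.rpow_neg hq0.le, Real.rpow_add hq0, Real.rpow_one, mul_inv, div_eq_mul_inv, mul_comm]
  gcongr
  have := Real.rpow_pos_of_pos hq0 ρ
  rw [inv_eq_one_div, le_div_iff₀ this, mul_comm]
  exact h

lemma thue_key (α : ℝ) (hα : IsAlgebraic ℚ α) (d : ℕ)
    (hd : (minpoly ℚ α).natDegree = d) (hd3 : 3 ≤ d)
    (ρ : ℝ) (hρ : (d : ℝ) / 2 < ρ) :
    ∃ M : ℕ, ∀ p₁ q₁ : ℤ, (M : ℤ) ≤ q₁ → 1 ≤ q₁ → (q₁ : ℝ) ^ ρ * |(q₁ : ℝ) * α - p₁| ≤ 1 →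
      ∃ N : ℕ, ∀ p₂ q₂ : ℤ, (N : ℤ) ≤ q₂ → 1 ≤ q₂ → (q₂ : ℝ) ^ ρ * |(q₂ : ℝ) * α - p₂| ≤ 1 →
        False := by
  have hαi : IsIntegral ℚ α := hα.isIntegral
  have hd0 : (3 : ℝ) ≤ d := by exact_mod_cast hd3
  have hρ0 : 0 < ρ := by linarith
  obtain ⟨K, hK⟩ := exists_nat_ge ((2 * ρ + 5) / (2 * ρ - d))
  have hK' : 2 * ρ + 5 ≤ K * (2 * ρ - d) := by
    rwa [div_le_iff₀ (by linarith)] at hK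
  have hK2 : 2 ≤ K := by
    by_contra hlt
    have : (K : ℝ) ≤ 1 := by exact_mod_cast (by omega : K ≤ 1)
    nlinarith
  obtain ⟨C, hC1, hS⟩ := thue_siegel α hαi d hd (by omega) K (by omega)
  set D : ℝ := (16 * (2 + |α|) ^ 2) ^ (d * K + 1) * C with hD
  have hD1 : 1 ≤ D := by
    have : 1 ≤ 16 * (2 + |α|) ^ 2 := by nlinarith [abs_nonneg α]
    exact one_le_mul_of_one_le_of_one_le (one_le_pow₀ this) hC1
  obtain ⟨M, hM⟩ := exists_nat_ge (4 * D)
  refine ⟨M, fun p₁ q₁ hMq h1 hg1 => ?_⟩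
  obtain ⟨S, hSb⟩ := exists_nat_ge (2 * K + (1 + ρ) * d)
  lift q₁ to ℕ using (by omega) with x
  have hxM : (M : ℝ) ≤ x := by exact_mod_cast hMq
  have hxr : 4 * D ≤ (x : ℝ) := hM.trans hxM
  have hx2 : 2 ≤ x := by
    have : (2 : ℝ) ≤ x := by linarith
    exact_mod_cast this
  refine ⟨(x ^ (2 * K)) ^ S, fun p₂ q₂ hNq h2 hg2 => ?_⟩
  lift q₂ to ℕ using (by omega) with y
  have hNy : (x ^ (2 * K)) ^ S ≤ y := by exact_mod_cast hNq
  have hb : 1 < x ^ (2 * K) := Nat.one_lt_pow (by omega) (by omega)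
  have hy0 : y ≠ 0 := by omega
  set s := Nat.log (x ^ (2 * K)) y with hs
  have hSs : S ≤ s := (Nat.le_log_iff_pow_le hb hy0).2 hNy
  have hlo : (x ^ (2 * K)) ^ s ≤ y := Nat.pow_log_le_self _ hy0
  have hhi : y < (x ^ (2 * K)) ^ (s + 1) := Nat.lt_pow_succ_log_self hb y
  rw [← pow_mul] at hlo hhi
  have hsb : 2 * K + (1 + ρ) * d ≤ (s : ℝ) := hSb.trans (by exact_mod_cast hSs)
  have hds : d ≤ s := by
    have : (d : ℝ) ≤ s := by nlinarith [(Nat.cast_nonneg K : (0 : ℝ) ≤ K)]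
    exact_mod_cast this
  have hs1 : 1 ≤ s := by omega
  obtain ⟨P, Q, hPQ, hPd, hQd, hPH, hQH, hvan⟩ := hS s hs1
  have hg1' := thue_good α ρ p₁ x h1 hg1
  have hg2' := thue_good α ρ p₂ y h2 hg2
  have hKs : 2 * s + d ≤ 2 * K * s := by nlinarith
  have hinj : Function.Injective (Int.castRingHom ℚ) := Int.cast_injective
  have hmapmap : ∀ R : ℤ[X], (R.map (Int.castRingHom ℚ)).map (algebraMap ℚ ℝ)
      = R.map (Int.castRingHom ℝ) := by
    intro R; rw [Polynomial.map_map]; congr 1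
  obtain ⟨j, hjJ, hjne⟩ := thue_nonvanish α hαi (by omega) (P.map (Int.castRingHom ℚ))
    (Q.map (Int.castRingHom ℚ))
    (by
      rcases hPQ with h | h
      · left; rwa [Ne, Polynomial.map_eq_zero_iff hinj]
      · right; rwa [Ne, Polynomial.map_eq_zero_iff hinj])
    (2 * K * s) ((d * K + 1) * s) (2 * s + d)
    (natDegree_map_le.trans_lt hPd) (natDegree_map_le.trans_lt hQd)
    (by
      rw [hd]
      have : 1 ≤ d * K := Nat.mul_pos (by omega) (by omega)
      calc (d * K + 1) * s ≤ (d * K + d * K) * s := by gcongr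
        _ = _ := by ring)
    (by
      rw [hmapmap, hmapmap]
      exact (thue_hasse_dvd _ _ _).2 hvan)
    (by
      rw [hd]
      obtain ⟨r, hr⟩ : ∃ r, 2 * K * s = r + 1 := ⟨2 * K * s - 1, by omega⟩
      have e : 2 * ((d * K + 1) * s) = d * (2 * K * s) + 2 * s := by ring
      rw [e, hr, Nat.add_sub_cancel, mul_add]
      omega)
    ((p₁ : ℚ) / (x : ℤ)) ((p₂ : ℚ) / (y : ℤ))
  have hlow := thue_lower P Q _ hPd hQd j p₁ x p₂ y (by omega) (by omega) hjne
  have hx1 : |(p₁ : ℝ) / ((x : ℤ) : ℝ) - α| ≤ 1 := by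
    refine hg1'.trans (Real.rpow_le_one_of_one_le_of_nonpos ?_ (by linarith))
    exact_mod_cast h1
  have hup := thue_upper α ((p₁ : ℝ) / ((x : ℤ) : ℝ)) ((p₂ : ℝ) / ((y : ℤ) : ℝ)) P Q _ hPd hQd _
    hPH hQH _ j hvan hx1
  have eD : (16 * (2 + |α|) ^ 2) ^ ((d * K + 1) * s) * C ^ s = D ^ s := by
    rw [hD, mul_pow (_ ^ (d * K + 1)) C s, ← pow_mul (16 * (2 + |α|) ^ 2)]
  rw [eD] at hup
  have hnum := thue_numeric D x y ρ |(p₁ : ℝ) / ((x : ℤ) : ℝ) - α|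
    |(p₂ : ℝ) / ((y : ℤ) : ℝ) - α| d K s j hD1 hxr hρ0 hs1 hK' hsb hjJ.le
    (hjJ.le.trans hKs) (by exact_mod_cast hlo)
    (by exact_mod_cast hhi.le) (abs_nonneg _)
    (by simpa using hg1') (by simpa using hg2')
  have : (1 : ℝ) ≤ 1 / 2 := by
    refine hlow.trans (le_trans ?_ hnum)
    rw [Int.cast_natCast, Int.cast_natCast] at *
    gcongr
  norm_num at this

lemma thue_bounded_finite (α ρ : ℝ) (hρ : 0 < ρ) (M : ℕ) :
    {pq : ℤ × ℤ | (1 ≤ pq.2 ∧ (pq.2 : ℝ) ^ ρ * |(pq.2 : ℝ) * α - (pq.1 : ℝ)| ≤ 1) ∧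
      pq.2 < M}.Finite := by
  obtain ⟨L, hL⟩ := exists_nat_ge ((M : ℝ) * |α| + 1)
  refine ((Set.finite_Icc (-(L : ℤ)) L).prod (Set.finite_Icc (1 : ℤ) M)).subset ?_
  rintro ⟨p, q⟩ ⟨⟨h1, h2⟩, h3⟩
  simp only at h1 h2 h3
  have hq1 : (1 : ℝ) ≤ q := by exact_mod_cast h1
  have hqM : (q : ℝ) ≤ M := by exact_mod_cast h3.le
  have hr : 1 ≤ (q : ℝ) ^ ρ := Real.one_le_rpow hq1 hρ.le
  have h4 : |(q : ℝ) * α - p| ≤ 1 :=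
    (le_mul_of_one_le_left (abs_nonneg _) hr).trans h2
  have h5 : |(p : ℝ)| ≤ L := by
    calc |(p : ℝ)| = |(q : ℝ) * α - ((q : ℝ) * α - p)| := by ring_nf
      _ ≤ |(q : ℝ) * α| + |(q : ℝ) * α - p| := abs_sub _ _
      _ ≤ M * |α| + 1 := by
        rw [abs_mul, abs_of_pos (by linarith : (0 : ℝ) < q)]; gcongr
      _ ≤ L := hL
  have h6 : |p| ≤ (L : ℤ) := by exact_mod_cast h5
  exact ⟨⟨(abs_le.1 h6).1, (abs_le.1 h6).2⟩, ⟨h1, h3.le⟩⟩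

/-- Thue's approximation theorem: if `α` is a real algebraic number of degree `d ≥ 3` over `ℚ`
and `ρ > d/2`, then the set of integer pairs `(p, q)` with `q ≥ 1` and `q^ρ * |q·α − p| ≤ 1`
is finite. -/
theorem thue_theorem (α : ℝ) (hα : IsAlgebraic ℚ α) (d : ℕ)
    (hd : (minpoly ℚ α).natDegree = d) (hd3 : 3 ≤ d)
    (ρ : ℝ) (hρ : (d : ℝ) / 2 < ρ) :
    {pq : ℤ × ℤ | 1 ≤ pq.2 ∧ (pq.2 : ℝ) ^ ρ * |(pq.2 : ℝ) * α - (pq.1 : ℝ)| ≤ 1}.Finite := by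
  have hρ0 : 0 < ρ := lt_of_le_of_lt (by positivity) hρ
  obtain ⟨M, hM⟩ := thue_key α hα d hd hd3 ρ hρ
  by_cases hex : ∃ p₁ q₁ : ℤ, (M : ℤ) ≤ q₁ ∧ 1 ≤ q₁ ∧ (q₁ : ℝ) ^ ρ * |(q₁ : ℝ) * α - p₁| ≤ 1
  · obtain ⟨p₁, q₁, h1, h2, h3⟩ := hex
    obtain ⟨N, hN⟩ := hM p₁ q₁ h1 h2 h3
    refine (thue_bounded_finite α ρ hρ0 N).subset ?_
    rintro ⟨p, q⟩ h
    refine ⟨h, ?_⟩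
    by_contra hlt
    exact hN p q (not_lt.1 hlt) h.1 h.2
  · refine (thue_bounded_finite α ρ hρ0 M).subset ?_
    rintro ⟨p, q⟩ h
    refine ⟨h, ?_⟩
    by_contra hlt
    exact hex ⟨p, q, not_lt.1 hlt, h.1, h.2⟩
end

section
/- Dyson's approximation theorem: let α be a real algebraic number of degree d over ℚ, with d ≥ 3, and let ρ be a real number with ρ > √(2d). Then the set of pairs of integers (p, q) with q ≥ 1 such that q^ρ · |q·α − p| ≤ 1 is finite. -/
open Polynomial

lemma dy_wronsk_ne_zero {k : ℕ} (φ : Fin k → ℚ[X]) (h : LinearIndependent ℚ φ) :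
    (Matrix.of fun i l : Fin k => derivative^[(i : ℕ)] (φ l)).det ≠ 0 := by
  intro hdet
  obtain ⟨a, ha, hM⟩ := Matrix.exists_vecMul_eq_zero_iff.mpr hdet
  have hrel : ∀ l, ∑ i, a i * derivative^[(i : ℕ)] (φ l) = 0 := by
    intro l
    have := congrFun hM l
    simpa [Matrix.vecMul, dotProduct] using this
  obtain ⟨i0, hi0⟩ : ∃ i, a i ≠ 0 := by
    by_contra hc
    push Not at hc
    exact ha (funext hc)
  obtain ⟨m, hm, hmax⟩ := Finset.exists_max_image (Finset.univ.filter fun i => a i ≠ 0) id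
    ⟨i0, by simp [hi0]⟩
  simp only [Finset.mem_filter, Finset.mem_univ, true_and, id] at hm hmax
  obtain ⟨x0, hx0⟩ : ∃ x, (a m).eval x ≠ 0 := by
    by_contra hc
    push Not at hc
    exact hm (Polynomial.funext (fun x => by simpa using hc x))
  let L : (Fin k → ℚ) →ₗ[ℚ] (Fin (m : ℕ) → ℚ) :=
    { toFun := fun c i => ∑ l, c l * (derivative^[(i : ℕ)] (φ l)).eval x0
      map_add' := by
        intro c c'
        funext i
        simp [add_mul, Finset.sum_add_distrib]
      map_smul' := by
        intro r c
        funext i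
        simp [Finset.mul_sum, mul_assoc] }
  have hker : LinearMap.ker L ≠ ⊥ := by
    apply LinearMap.ker_ne_bot_of_finrank_lt
    simp
  obtain ⟨c, hcL, hc0⟩ := (Submodule.ne_bot_iff _).mp hker
  set ψ : ℚ[X] := ∑ l, c l • φ l with hψ
  have hψ0 : ψ ≠ 0 := by
    intro h0
    exact hc0 (funext (Fintype.linearIndependent_iff.mp h c h0))
  have hder : ∀ i : ℕ, derivative^[i] ψ = ∑ l, c l • derivative^[i] (φ l) := by
    intro i
    rw [hψ, Polynomial.iterate_derivative_sum]
    simp [Polynomial.iterate_derivative_smul]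
  have hvan : ∀ i : ℕ, i < (m : ℕ) → (derivative^[i] ψ).eval x0 = 0 := by
    intro i hi
    have := congrFun (LinearMap.mem_ker.mp hcL) ⟨i, hi⟩
    rw [hder, eval_finsetSum]
    simpa [L] using this
  have hrelψ : ∑ i, a i * derivative^[(i : ℕ)] ψ = 0 := by
    simp_rw [hder, Finset.mul_sum]
    rw [Finset.sum_comm]
    apply Finset.sum_eq_zero
    intro l _
    have := hrel l
    simp_rw [mul_smul_comm]
    rw [← Finset.smul_sum, this, smul_zero]
  set v := ψ.rootMultiplicity x0 with hv
  have hmv : (m : ℕ) ≤ v := by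
    rcases Nat.eq_zero_or_pos (m : ℕ) with h0 | hpos
    · omega
    · have := (lt_rootMultiplicity_iff_isRoot_iterate_derivative (n := (m : ℕ) - 1) (t := x0) hψ0).mpr
        (fun j hj => hvan j (by omega))
      omega
  have hdvd : ∀ i : ℕ, (X - C x0) ^ (v - i) ∣ derivative^[i] ψ := fun i =>
    pow_sub_dvd_iterate_derivative_of_pow_dvd i (pow_rootMultiplicity_dvd ψ x0)
  have hdm : (X - C x0) ^ (v - m + 1) ∣ a m * derivative^[(m : ℕ)] ψ := by
    rw [← Finset.add_sum_erase _ _ (Finset.mem_univ m)] at hrelψ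
    rw [eq_neg_of_add_eq_zero_left hrelψ, dvd_neg]
    apply Finset.dvd_sum
    intro i hi
    have hne := Finset.ne_of_mem_erase hi
    by_cases hai : a i = 0
    · simp [hai]
    · have hlt : i < m := lt_of_le_of_ne (hmax i hai) hne
      have hlt' : (i : ℕ) < m := hlt
      exact Dvd.dvd.mul_left ((pow_dvd_pow _ (by omega)).trans (hdvd i)) _
  have hnd : ¬ (X - C x0) ∣ a m := by
    rw [dvd_iff_isRoot]
    exact hx0
  have hdm' : (X - C x0) ^ (v - m + 1) ∣ derivative^[(m : ℕ)] ψ :=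
    (prime_X_sub_C x0).pow_dvd_of_dvd_mul_left _ hnd hdm
  have h1 := pow_sub_dvd_iterate_derivative_of_pow_dvd (v - m) hdm'
  rw [← Function.iterate_add_apply, Nat.sub_add_cancel hmv, Nat.add_sub_cancel_left, pow_one,
    dvd_iff_isRoot] at h1
  have h2 := eval_iterate_derivative_rootMultiplicity (p := ψ) (t := x0)
  rw [← hv, h1] at h2
  have h3 := eval_divByMonic_pow_rootMultiplicity_ne_zero x0 hψ0
  rw [← hv] at h3
  have h4 := Nat.factorial_ne_zero v
  simp [h3, h4] at h2

lemma dy_gauss (U : ℤ[X]) (β : ℚ) (m : ℕ)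
    (h : (X - C β) ^ m ∣ U.map (Int.castRingHom ℚ)) : (β.den : ℤ) ^ m ∣ U.leadingCoeff := by
  have hden : (β.den : ℚ) ≠ 0 := by exact_mod_cast β.den_nz
  set g : ℤ[X] := C (β.den : ℤ) * X - C β.num with hg
  have hprim : g.IsPrimitive := by
    intro r hr
    rw [C_dvd_iff_dvd_coeff] at hr
    have h1 : r ∣ (β.den : ℤ) := by
      have := hr 1
      rw [hg, coeff_sub, coeff_C_mul, coeff_X_one, coeff_C_of_ne_zero one_ne_zero] at this
      simpa using this
    have h0 : r ∣ β.num := by simpa [hg] using hr 0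
    have hc : IsCoprime β.num (β.den : ℤ) := by
      rw [Int.isCoprime_iff_gcd_eq_one]
      exact β.reduced
    exact hc.isUnit_of_dvd' h0 h1
  have hprimm : (g ^ m).IsPrimitive := by
    induction m with
    | zero => simp
    | succ m ih =>
      rw [pow_succ]
      exact (ih ((pow_dvd_pow _ (Nat.le_succ m)).trans h)).mul hprim
  have hmap : g.map (Int.castRingHom ℚ) = C (β.den : ℚ) * (X - C β) := by
    simp only [hg, Polynomial.map_sub, Polynomial.map_mul, map_X, map_C, mul_sub]
    congr 1
    rw [← C_mul]
    congr 1
    have := Rat.den_mul_eq_num β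
    simp only [eq_intCast]
    exact this.symm
  have hdvd : g ^ m ∣ U := by
    rw [IsPrimitive.Int.dvd_iff_map_cast_dvd_map_cast _ _ hprimm, Polynomial.map_pow, hmap, mul_pow]
    have hu : IsUnit ((C (β.den : ℚ) : ℚ[X]) ^ m) := (isUnit_C.mpr hden.isUnit).pow m
    rwa [hu.mul_left_dvd]
  have hlc : g.leadingCoeff = β.den := by
    have hz : (β.den : ℤ) ≠ 0 := by exact_mod_cast β.den_nz
    rw [hg, sub_eq_add_neg, ← C_neg]
    exact leadingCoeff_linear hz
  obtain ⟨q, rfl⟩ := hdvd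
  rw [leadingCoeff_mul, leadingCoeff_pow, hlc]
  exact dvd_mul_right _ _

/-- Coefficientwise majorization by `A * (1 + X)^D`. -/
def DyMaj (p : ℤ[X]) (A D : ℕ) : Prop := ∀ n, (p.coeff n).natAbs ≤ A * D.choose n

lemma DyMaj.of_bound {p : ℤ[X]} {A D : ℕ} (hd : p.natDegree ≤ D)
    (h : ∀ n, (p.coeff n).natAbs ≤ A) : DyMaj p A D := by
  intro n
  rcases le_or_gt n D with hn | hn
  · exact (h n).trans (Nat.le_mul_of_pos_right _ (Nat.choose_pos hn))
  · rw [coeff_eq_zero_of_natDegree_lt (by omega)]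
    simp

lemma DyMaj.mono {p : ℤ[X]} {A B D : ℕ} (h : DyMaj p A D) (hAB : A ≤ B) : DyMaj p B D :=
  fun n => (h n).trans (Nat.mul_le_mul_right _ hAB)

lemma DyMaj.mul {p q : ℤ[X]} {A B D E : ℕ} (hp : DyMaj p A D) (hq : DyMaj q B E) :
    DyMaj (p * q) (A * B) (D + E) := by
  intro n
  rw [coeff_mul, Nat.add_choose_eq, Finset.mul_sum]
  refine (Int.natAbs_sum_le _ _).trans (Finset.sum_le_sum fun ij _ => ?_)
  rw [Int.natAbs_mul]
  calc _ ≤ (A * D.choose ij.1) * (B * E.choose ij.2) := Nat.mul_le_mul (hp _) (hq _)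
    _ = _ := by ring

lemma DyMaj.derivative {p : ℤ[X]} {A D : ℕ} (hp : DyMaj p A D) :
    DyMaj (derivative p) (A * D) D := by
  intro n
  rw [coeff_derivative, Int.natAbs_mul]
  have h1 : ((n : ℤ) + 1).natAbs = n + 1 := by omega
  rw [h1]
  have h2 : D.choose (n + 1) * (n + 1) = D.choose n * (D - n) := Nat.choose_succ_right_eq D n
  calc _ ≤ A * D.choose (n + 1) * (n + 1) := Nat.mul_le_mul_right _ (hp _)
    _ = A * (D.choose n * (D - n)) := by rw [mul_assoc, h2]
    _ ≤ A * (D.choose n * D) := by gcongr; omega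
    _ = _ := by ring

lemma DyMaj.iter {p : ℤ[X]} {A D : ℕ} (hp : DyMaj p A D) (i : ℕ) :
    DyMaj (Polynomial.derivative^[i] p) (A * D ^ i) D := by
  induction i with
  | zero => simpa using hp
  | succ i ih =>
    rw [Function.iterate_succ_apply', pow_succ, ← mul_assoc]
    exact ih.derivative

lemma DyMaj.prod {ι : Type*} (S : Finset ι) {f : ι → ℤ[X]} {A D : ℕ}
    (h : ∀ i ∈ S, DyMaj (f i) A D) : DyMaj (∏ i ∈ S, f i) (A ^ S.card) (S.card * D) := by
  classical
  induction S using Finset.induction_on with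
  | empty =>
    intro n
    rcases n with _ | n
    · simp
    · simp [coeff_one]
  | insert a S ha ih =>
    rw [Finset.prod_insert ha, Finset.card_insert_of_notMem ha]
    have := (h a (by simp)).mul (ih (fun i hi => h i (by simp [hi])))
    have e1 : A ^ (S.card + 1) = A * A ^ S.card := by ring
    have e2 : (S.card + 1) * D = D + S.card * D := by ring
    rw [e1, e2]
    exact this

lemma DyMaj.det {k : ℕ} {M : Matrix (Fin k) (Fin k) ℤ[X]} {A D : ℕ}
    (h : ∀ i j, DyMaj (M i j) A D) : DyMaj M.det (k.factorial * A ^ k) (k * D) := by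
  intro n
  rw [Matrix.det_apply, finsetSum_coeff]
  refine (Int.natAbs_sum_le _ _).trans ?_
  calc _ ≤ ∑ σ : Equiv.Perm (Fin k), A ^ k * (k * D).choose n := by
        apply Finset.sum_le_sum
        intro σ _
        have := DyMaj.prod (Finset.univ : Finset (Fin k)) (f := fun i => M (σ i) i)
          (fun i _ => h (σ i) i) n
        rw [Finset.card_univ, Fintype.card_fin] at this
        rcases Int.units_eq_one_or (Equiv.Perm.sign σ) with hs | hs <;> simpa [hs] using this
    _ = _ := by
        rw [Finset.sum_const, Finset.card_univ, Fintype.card_perm, Fintype.card_fin, smul_eq_mul,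
          mul_assoc]

lemma dy_wronsk_bound {s : ℕ} (P : Fin (s + 1) → ℤ[X]) (B D : ℕ) (hB : 1 ≤ B) (hD : 1 ≤ D)
    (hdeg : ∀ j, (P j).natDegree ≤ D) (hcoef : ∀ j n, ((P j).coeff n).natAbs ≤ B)
    (w : Fin (s + 1) → ℚ) (hF : ∑ j, w j • (P j).map (Int.castRingHom ℚ) ≠ 0) (β : ℚ) (M : ℕ)
    (hM : (X - C β) ^ M ∣ ∑ j, w j • (P j).map (Int.castRingHom ℚ)) :
    β.den ^ (M - s) ≤ (s + 1).factorial * (B * D ^ s) ^ (s + 1) * 2 ^ ((s + 1) * D) := by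
  classical
  set F := ∑ j, w j • (P j).map (Int.castRingHom ℚ) with hFdef
  obtain ⟨κ, a, hinj, hspan, hli⟩ :=
    exists_linearIndependent' ℚ (fun j => (P j).map (Int.castRingHom ℚ))
  have : Finite κ := Finite.of_injective a hinj
  have := Fintype.ofFinite κ
  set k := Fintype.card κ with hk
  have hks : k ≤ s + 1 := by
    simpa using Fintype.card_le_of_injective a hinj
  let e : Fin k ≃ κ := (Fintype.equivFin κ).symm
  set φ : Fin k → ℤ[X] := fun l => P (a (e l)) with hφ
  have hli' : LinearIndependent ℚ (fun l => (φ l).map (Int.castRingHom ℚ)) :=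
    hli.comp e e.injective
  have hFs : F ∈ Submodule.span ℚ (Set.range fun l => (φ l).map (Int.castRingHom ℚ)) := by
    have hr : (Set.range fun l => (φ l).map (Int.castRingHom ℚ)) =
        Set.range ((fun j => (P j).map (Int.castRingHom ℚ)) ∘ a) := by
      ext x
      constructor
      · rintro ⟨l, rfl⟩
        exact ⟨e l, rfl⟩
      · rintro ⟨l, rfl⟩
        exact ⟨e.symm l, by simp [hφ]⟩
    rw [hr, hspan]
    exact Submodule.sum_mem _ fun j _ => Submodule.smul_mem _ _ (Submodule.subset_span ⟨j, rfl⟩)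
  obtain ⟨c, hc⟩ := (Submodule.mem_span_range_iff_exists_fun ℚ).mp hFs
  obtain ⟨l0, hl0⟩ : ∃ l, c l ≠ 0 := by
    by_contra hcon
    push Not at hcon
    apply hF
    rw [← hc]
    simp [hcon]
  have hW := dy_wronsk_ne_zero _ hli'
  set W : Matrix (Fin k) (Fin k) ℚ[X] :=
    Matrix.of fun i l : Fin k => derivative^[(i : ℕ)] ((φ l).map (Int.castRingHom ℚ)) with hWdef
  set Z : Matrix (Fin k) (Fin k) ℤ[X] :=
    Matrix.of fun i l : Fin k => derivative^[(i : ℕ)] (φ l) with hZdef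
  have hZW : Z.det.map (Int.castRingHom ℚ) = W.det := by
    have := RingHom.map_det (mapRingHom (Int.castRingHom ℚ)) Z
    rw [coe_mapRingHom] at this
    rw [this]
    congr 1
    ext1 i l
    simp [hZdef, hWdef, iterate_derivative_map]
  have hcol : ∀ i : Fin k, ∑ l, (C (c l)) • W i l = derivative^[(i : ℕ)] F := by
    intro i
    rw [← hc, iterate_derivative_sum]
    simp [hWdef, smul_eq_C_mul]
  have hdvd : (X - C β) ^ (M - s) ∣ W.det := by
    have h1 := Matrix.det_updateCol_sum W l0 (fun l => C (c l))
    simp_rw [hcol] at h1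
    have h2 : ∀ i : Fin k, ∃ g, derivative^[(i : ℕ)] F = (X - C β) ^ (M - s) * g := by
      intro i
      have := pow_sub_dvd_iterate_derivative_of_pow_dvd (i : ℕ) hM
      exact (pow_dvd_pow _ (by have := i.2; omega)).trans this
    choose g hg using h2
    have h3 : (fun i : Fin k => derivative^[(i : ℕ)] F) = (X - C β) ^ (M - s) • g := by
      funext i
      simp [hg]
    rw [h3, Matrix.det_updateCol_smul, smul_eq_mul] at h1
    have hu : IsUnit (C (c l0)) := isUnit_C.mpr hl0.isUnit
    rw [← hu.dvd_mul_left, ← h1]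
    exact dvd_mul_right _ _
  rw [← hZW] at hdvd
  have hg := dy_gauss _ β _ hdvd
  have hZ0 : Z.det ≠ 0 := by
    intro h0
    rw [h0, Polynomial.map_zero] at hZW
    exact hW hZW.symm
  have hmaj : DyMaj Z.det (k.factorial * (B * D ^ s) ^ k) (k * D) := by
    apply DyMaj.det
    intro i l
    have := (DyMaj.of_bound (hdeg (a (e l))) (hcoef (a (e l)))).iter (i : ℕ)
    refine DyMaj.mono this ?_
    gcongr
    · have := i.2
      omega
  have hle : β.den ^ (M - s) ≤ Z.det.leadingCoeff.natAbs := by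
    have := Int.le_of_dvd (by simpa using hZ0) ((dvd_abs _ _).mpr hg)
    rw [Int.abs_eq_natAbs] at this
    exact_mod_cast this
  refine hle.trans ((hmaj _).trans ?_)
  have hBD : 1 ≤ B * D ^ s := Nat.mul_pos hB (pow_pos hD s)
  gcongr
  · exact (Nat.choose_le_two_pow _ _).trans (by gcongr; norm_num)

lemma dy_powers (f : ℤ[X]) (d : ℕ) (hd : f.natDegree = d) (hd1 : 1 ≤ d) (α : ℝ)
    (hα : aeval α f = 0) :
    ∃ H : ℕ, 1 ≤ H ∧ ∀ m : ℕ, ∃ E : ℤ[X], (∀ n, d ≤ n → E.coeff n = 0) ∧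
      (∀ n, (E.coeff n).natAbs ≤ H ^ m) ∧
      (f.leadingCoeff : ℝ) ^ m * α ^ m = ∑ k : Fin d, (E.coeff k : ℝ) * α ^ (k : ℕ) := by
  have hf0 : f ≠ 0 := by
    rintro rfl
    simp at hd
    omega
  set A := f.leadingCoeff with hA
  have hAd : f.coeff d = A := by rw [hA, leadingCoeff, hd]
  have hA1 : 1 ≤ A.natAbs := by
    rw [Nat.one_le_iff_ne_zero, Int.natAbs_ne_zero]
    simpa [hA] using hf0
  set S := ∑ n ∈ Finset.range (d + 1), (f.coeff n).natAbs with hS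
  have hfS : ∀ n, (f.coeff n).natAbs ≤ S := by
    intro n
    rcases lt_or_ge n (d + 1) with hn | hn
    · exact Finset.single_le_sum (f := fun n => (f.coeff n).natAbs) (fun _ _ => Nat.zero_le _)
        (Finset.mem_range.mpr hn)
    · rw [coeff_eq_zero_of_natDegree_lt (by omega)]
      simp
  have key : ∀ m : ℕ, ∃ E : ℤ[X], (∀ n, d ≤ n → E.coeff n = 0) ∧
      (∀ n, (E.coeff n).natAbs ≤ (A.natAbs + S) ^ m) ∧ (A : ℝ) ^ m * α ^ m = aeval α E := by
    intro m
    induction m with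
    | zero =>
      refine ⟨1, ?_, ?_, by simp⟩
      · intro n hn
        rw [coeff_one, if_neg (by omega)]
      · intro n
        rw [coeff_one]
        split_ifs <;> simp
    | succ m ih =>
      obtain ⟨E, h1, h2, h3⟩ := ih
      refine ⟨C A * (X * E) - C (E.coeff (d - 1)) * f, ?_, ?_, ?_⟩
      · intro n hn
        obtain ⟨n, rfl⟩ : ∃ n', n = n' + 1 := ⟨n - 1, by omega⟩
        rw [coeff_sub, coeff_C_mul, coeff_C_mul, coeff_X_mul]
        rcases Nat.eq_or_lt_of_le hn with h | h
        · rw [← h, hAd]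
          have : d - 1 = n := by omega
          rw [this]
          ring
        · rw [h1 n (by omega), coeff_eq_zero_of_natDegree_lt (p := f) (by omega)]
          ring
      · intro n
        rw [coeff_sub, coeff_C_mul, coeff_C_mul]
        have hx : ((X * E).coeff n).natAbs ≤ (A.natAbs + S) ^ m := by
          rcases n with _ | n
          · simp
          · rw [coeff_X_mul]
            exact h2 n
        calc _ ≤ (A * (X * E).coeff n).natAbs + (E.coeff (d - 1) * f.coeff n).natAbs :=
              Int.natAbs_sub_le _ _
          _ = A.natAbs * ((X * E).coeff n).natAbs + (E.coeff (d - 1)).natAbs * (f.coeff n).natAbs := by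
              rw [Int.natAbs_mul, Int.natAbs_mul]
          _ ≤ A.natAbs * (A.natAbs + S) ^ m + (A.natAbs + S) ^ m * S := by
              gcongr
              · exact h2 _
              · exact hfS _
          _ = _ := by ring
      · rw [map_sub, map_mul, map_mul, map_mul, hα, ← h3]
        simp
        ring
  refine ⟨A.natAbs + S, by omega, fun m => ?_⟩
  obtain ⟨E, h1, h2, h3⟩ := key m
  refine ⟨E, h1, h2, ?_⟩
  rw [h3, aeval_eq_sum_range' (n := d), Finset.sum_range]
  · simp
  · by_cases hE : E = 0
    · subst hE
      simp only [natDegree_zero]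
      omega
    · by_contra hcon
      have := h1 E.natDegree (by omega)
      rw [coeff_natDegree, leadingCoeff_eq_zero] at this
      exact hE this

lemma dy_siegel {ι κ : Type*} [Fintype ι] [Fintype κ] (M : Matrix ι κ ℤ) (B e N : ℕ)
    (hB : 1 ≤ B) (hM : ∀ i j, (M i j).natAbs ≤ B) (hι : 0 < Fintype.card ι) (hN : 1 ≤ N)
    (hle : Fintype.card ι ≤ N * e)
    (hlt : Fintype.card ι + N ≤ Fintype.card κ) :
    ∃ t : κ → ℤ, t ≠ 0 ∧ M.mulVec t = 0 ∧ ∀ j, (t j).natAbs ≤ (Fintype.card κ * B) ^ e := by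
  classical
  let : SeminormedAddCommGroup (Matrix ι κ ℤ) := Matrix.seminormedAddCommGroup
  obtain ⟨t, ht0, htM, htn⟩ := Int.Matrix.exists_ne_zero_int_vec_norm_le M (by omega) hι
  refine ⟨t, ht0, htM, fun j => ?_⟩
  have hMn : max 1 ‖M‖ ≤ (B : ℝ) := by
    apply max_le (by exact_mod_cast hB)
    rw [Matrix.norm_le_iff (by positivity)]
    intro i j
    rw [Int.norm_eq_abs]
    have := hM i j
    rw [← Int.cast_abs, Int.abs_eq_natAbs]
    exact_mod_cast this
  have hκ1 : (1 : ℝ) ≤ Fintype.card κ := by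
    have : 1 ≤ Fintype.card κ := by omega
    exact_mod_cast this
  have hexp : (Fintype.card ι : ℝ) / (Fintype.card κ - Fintype.card ι) ≤ e := by
    have h1 : (Fintype.card ι : ℝ) + N ≤ Fintype.card κ := by exact_mod_cast hlt
    have h2 : (Fintype.card ι : ℝ) ≤ N * e := by exact_mod_cast hle
    have h3 : (1 : ℝ) ≤ N := by exact_mod_cast hN
    rw [div_le_iff₀ (by linarith)]
    calc (Fintype.card ι : ℝ) ≤ e * N := by linarith
      _ ≤ e * (Fintype.card κ - Fintype.card ι) := by
          apply mul_le_mul_of_nonneg_left _ (by positivity)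
          linarith
  have h1 : ‖t j‖ ≤ ‖t‖ := norm_le_pi_norm t j
  have h2 : ‖t‖ ≤ ((Fintype.card κ : ℝ) * B) ^ e := by
    refine htn.trans ?_
    rw [← Real.rpow_natCast]
    have hb : (1 : ℝ) ≤ Fintype.card κ * max 1 ‖M‖ :=
      one_le_mul_of_one_le_of_one_le hκ1 (le_max_left _ _)
    calc _ ≤ ((Fintype.card κ : ℝ) * max 1 ‖M‖) ^ (e : ℝ) :=
          Real.rpow_le_rpow_of_exponent_le hb hexp
      _ ≤ _ := by
          apply Real.rpow_le_rpow (by linarith) _ (by positivity)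
          gcongr
  have h3 := h1.trans h2
  rw [Int.norm_eq_abs, ← Int.cast_abs, Int.abs_eq_natAbs] at h3
  exact_mod_cast h3

lemma dy_card (T N d : ℕ) :
    2 * Fintype.card (Σ b : Fin T, Fin (N * (T - b)) × Fin d) = N * (d * T * (T + 1)) := by
  have h : ∑ b : Fin T, 2 * (T - (b : ℕ)) = T * (T + 1) := by
    rw [← Finset.sum_range (fun b => 2 * (T - b))]
    rw [← Finset.sum_range_reflect]
    have : ∀ j ∈ Finset.range T, 2 * (T - (T - 1 - j)) = 2 * j + 2 := by
      intro j hj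
      have := Finset.mem_range.mp hj
      omega
    rw [Finset.sum_congr rfl this]
    clear this
    induction T with
    | zero => simp
    | succ n ih => rw [Finset.sum_range_succ, ih]; ring
  rw [Fintype.card_sigma]
  simp only [Fintype.card_prod, Fintype.card_fin]
  rw [mul_assoc d, ← h, Finset.mul_sum, Finset.mul_sum, Finset.mul_sum]
  apply Finset.sum_congr rfl
  intro b _
  ring

lemma dy_aux (f : ℤ[X]) (d : ℕ) (hd : f.natDegree = d) (hd1 : 1 ≤ d) (α : ℝ)
    (hα : aeval α f = 0) (s T : ℕ) (hT : 1 ≤ T) (hsT : d * T * (T + 1) < 2 * (s * (s + 1))) :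
    ∃ K : ℕ, 1 ≤ K ∧ ∀ N : ℕ, 1 ≤ N → ∃ P : Fin (s + 1) → ℤ[X], (∃ j, P j ≠ 0) ∧
      (∀ j, (P j).natDegree ≤ s * N) ∧ (∀ j n, ((P j).coeff n).natAbs ≤ K ^ N) ∧
      ∀ b < T, ∀ a < N * (T - b), ∑ j : Fin (s + 1), (((j : ℕ).choose b : ℕ) : ℝ) *
        α ^ ((j : ℕ) - b) * (hasseDeriv a ((P j).map (Int.castRingHom ℝ))).eval α = 0 := by
  classical
  obtain ⟨H, hH1, hH⟩ := dy_powers f d hd hd1 α hα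
  choose E hE1 hE2 hE3 using hH
  have hf0 : f ≠ 0 := by
    rintro rfl
    simp at hd
    omega
  set A := f.leadingCoeff with hA
  have hA0 : A ≠ 0 := by simpa [hA] using hf0
  have hA1 : 1 ≤ A.natAbs := by
    rw [Nat.one_le_iff_ne_zero, Int.natAbs_ne_zero]
    exact hA0
  set L := 2 * A.natAbs * H with hL
  have hL1 : 1 ≤ L := by
    have : 0 < 2 * A.natAbs * H := by positivity
    omega
  set e := d * T * (T + 1) with he
  refine ⟨((s + 1) ^ 2 * 2 * L ^ (2 * s)) ^ e, Nat.one_le_pow _ _ (by positivity), fun N hN => ?_⟩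
  let ι := Σ b : Fin T, Fin (N * (T - b)) × Fin d
  let κ := Fin (s + 1) × Fin (s * N + 1)
  let mm : ι → κ → ℕ := fun r c => ((c.1 : ℕ) - r.1) + ((c.2 : ℕ) - r.2.1)
  let R := s + s * N
  have hmR : ∀ r c, mm r c ≤ R := by
    intro r c
    have h1 := c.1.2
    have h2 := c.2.2
    simp only [mm, R]
    omega
  let M : Matrix ι κ ℤ := fun r c => ((c.1 : ℕ).choose r.1 : ℤ) * ((c.2 : ℕ).choose r.2.1 : ℤ) *
    (A ^ (R - mm r c) * (E (mm r c)).coeff r.2.2)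
  have hMb : ∀ r c, (M r c).natAbs ≤ L ^ (2 * s * N) := by
    intro r c
    have h1 : ((c.1 : ℕ).choose r.1) ≤ 2 ^ s :=
      (Nat.choose_le_two_pow _ _).trans (Nat.pow_le_pow_right (by norm_num) (by have := c.1.2; omega))
    have h2 : ((c.2 : ℕ).choose r.2.1) ≤ 2 ^ (s * N) :=
      (Nat.choose_le_two_pow _ _).trans (Nat.pow_le_pow_right (by norm_num) (by have := c.2.2; omega))
    have h3 : A.natAbs ^ (R - mm r c) ≤ A.natAbs ^ R := Nat.pow_le_pow_right hA1 (by omega)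
    have h4 : ((E (mm r c)).coeff r.2.2).natAbs ≤ H ^ R :=
      (hE2 _ _).trans (Nat.pow_le_pow_right hH1 (hmR r c))
    have h5 : R ≤ 2 * s * N := by
      have : s ≤ s * N := Nat.le_mul_of_pos_right _ hN
      simp only [R]
      nlinarith
    calc (M r c).natAbs = ((c.1 : ℕ).choose r.1) * ((c.2 : ℕ).choose r.2.1) *
        (A.natAbs ^ (R - mm r c) * ((E (mm r c)).coeff r.2.2).natAbs) := by
          simp only [M, Int.natAbs_mul, Int.natAbs_pow, Int.natAbs_natCast]
      _ ≤ 2 ^ s * 2 ^ (s * N) * (A.natAbs ^ R * H ^ R) := by gcongr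
      _ = L ^ R := by
          rw [hL, mul_pow, mul_pow, ← pow_add]
          simp only [R]
          ring
      _ ≤ _ := Nat.pow_le_pow_right hL1 h5
  have hcard := dy_card T N d
  have hcι : 2 * Fintype.card ι = N * e := hcard
  have hcκ : Fintype.card κ = (s + 1) * (s * N + 1) := by simp [κ]
  have hpos : 0 < Fintype.card ι := by
    have : 0 < N * e := by positivity
    omega
  have hlt : Fintype.card ι + N ≤ Fintype.card κ := by
    rw [hcκ]
    -- parity: e is even
    have hev : Even e := by
      rw [he, mul_assoc]
      exact (Nat.even_mul_succ_self T).mul_left d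
    obtain ⟨g, hg⟩ := hev
    have h1 : g + 1 ≤ s * (s + 1) := by omega
    have h2 : Fintype.card ι = N * g := by
      have : 2 * Fintype.card ι = 2 * (N * g) := by rw [hcι, hg]; ring
      omega
    rw [h2]
    calc N * g + N = N * (g + 1) := by ring
      _ ≤ N * (s * (s + 1)) := Nat.mul_le_mul_left _ h1
      _ ≤ _ := by nlinarith
  obtain ⟨t, ht0, htM, htb⟩ := dy_siegel M (L ^ (2 * s * N)) e N (Nat.one_le_pow _ _ hL1) hMb hpos hN
    (by omega) hlt
  have htb' : ∀ c, (t c).natAbs ≤ (((s + 1) ^ 2 * 2 * L ^ (2 * s)) ^ e) ^ N := by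
    intro c
    refine (htb c).trans ?_
    rw [← pow_mul, mul_comm e N, pow_mul _ N e]
    apply Nat.pow_le_pow_left
    rw [hcκ, pow_mul L (2 * s) N, mul_pow _ (L ^ (2 * s)) N, mul_pow _ 2 N]
    apply Nat.mul_le_mul_right
    have h1 : N < 2 ^ N := Nat.lt_two_pow_self
    have h2 : (s + 1) ^ 2 ≤ ((s + 1) ^ 2) ^ N := Nat.le_self_pow (by omega) _
    calc (s + 1) * (s * N + 1) ≤ (s + 1) ^ 2 * N := by nlinarith
      _ ≤ _ := Nat.mul_le_mul h2 h1.le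
  let P : Fin (s + 1) → ℤ[X] := fun j => ∑ n : Fin (s * N + 1), monomial (n : ℕ) (t (j, n))
  have hPc : ∀ j, ∀ n : Fin (s * N + 1), (P j).coeff n = t (j, n) := by
    intro j n
    simp only [P, finsetSum_coeff, coeff_monomial]
    rw [Finset.sum_eq_single n]
    · simp
    · intro m _ hmn
      rw [if_neg (fun h => hmn (Fin.ext h))]
    · simp
  have hPd : ∀ j, (P j).natDegree ≤ s * N := by
    intro j
    apply natDegree_sum_le_of_forall_le
    intro n _
    exact (natDegree_monomial_le _).trans (by have := n.2; omega)
  refine ⟨P, ?_, hPd, ?_, ?_⟩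
  · by_contra hcon
    push Not at hcon
    apply ht0
    funext ⟨j, n⟩
    rw [← hPc, hcon]
    simp
  · intro j n
    rcases lt_or_ge n (s * N + 1) with hn | hn
    · have := hPc j ⟨n, hn⟩
      simp only at this
      rw [this]
      exact htb' _
    · rw [coeff_eq_zero_of_natDegree_lt (by have := hPd j; omega)]
      simp
  · intro b hb a ha
    have hev : ∀ j, (hasseDeriv a ((P j).map (Int.castRingHom ℝ))).eval α =
        ∑ n : Fin (s * N + 1), ((n : ℕ).choose a : ℝ) * (t (j, n) : ℝ) * α ^ ((n : ℕ) - a) := by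
      intro j
      simp only [P, Polynomial.map_sum, map_sum, eval_finsetSum, map_monomial, hasseDeriv_monomial,
        eval_monomial]
      simp
    simp_rw [hev, Finset.mul_sum]
    have hAR : (A : ℝ) ^ R ≠ 0 := pow_ne_zero _ (by exact_mod_cast hA0)
    apply (mul_right_inj' hAR).mp
    rw [mul_zero, Finset.mul_sum]
    simp_rw [Finset.mul_sum]
    rw [← Finset.sum_product' (f := fun (j : Fin (s + 1)) (n : Fin (s * N + 1)) =>
      (A : ℝ) ^ R * ((((j : ℕ).choose b : ℕ) : ℝ) * α ^ ((j : ℕ) - b) *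
        (((n : ℕ).choose a : ℝ) * (t (j, n) : ℝ) * α ^ ((n : ℕ) - a))))]
    let row : Fin d → ι := fun k => ⟨⟨b, hb⟩, ⟨⟨a, ha⟩, k⟩⟩
    have hterm : ∀ c : κ, (A : ℝ) ^ R * ((((c.1 : ℕ).choose b : ℕ) : ℝ) * α ^ ((c.1 : ℕ) - b) *
        (((c.2 : ℕ).choose a : ℝ) * (t (c.1, c.2) : ℝ) * α ^ ((c.2 : ℕ) - a))) =
        ∑ k : Fin d, ((M (row k) c * t c : ℤ) : ℝ) * α ^ (k : ℕ) := by
      intro c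
      set m := ((c.1 : ℕ) - b) + ((c.2 : ℕ) - a) with hm
      have hmk : ∀ k, mm (row k) c = m := fun k => rfl
      have hmR' : m ≤ R := by
        have h1 := c.1.2
        have h2 := c.2.2
        simp only [m, R]
        omega
      have h1 : ∀ k : Fin d, ((M (row k) c * t c : ℤ) : ℝ) * α ^ (k : ℕ) =
          (((c.1 : ℕ).choose b : ℝ) * ((c.2 : ℕ).choose a : ℝ) * (A : ℝ) ^ (R - m) * t c) *
            (((E m).coeff k : ℝ) * α ^ (k : ℕ)) := by
        intro k
        have : M (row k) c = ((c.1 : ℕ).choose b : ℤ) * ((c.2 : ℕ).choose a : ℤ) *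
          (A ^ (R - m) * (E m).coeff k) := rfl
        rw [this]
        push_cast
        ring
      simp_rw [h1]
      rw [← Finset.mul_sum, ← hE3 m]
      have h2 : (A : ℝ) ^ R = A ^ (R - m) * A ^ m := by rw [← pow_add, Nat.sub_add_cancel hmR']
      have h3 : α ^ m = α ^ ((c.1 : ℕ) - b) * α ^ ((c.2 : ℕ) - a) := by rw [← pow_add]
      rw [h2, h3]
      ring
    rw [Finset.univ_product_univ]
    rw [Finset.sum_congr rfl (fun c _ => hterm c), Finset.sum_comm]
    apply Finset.sum_eq_zero
    intro k _
    rw [← Finset.sum_mul, ← Int.cast_sum]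
    have := congrFun htM (row k)
    have h0 : ∑ c, M (row k) c * t c = 0 := this
    rw [h0]
    simp

lemma dy_nonvanish {s : ℕ} (P : Fin (s + 1) → ℤ[X]) (B D : ℕ) (hB : 1 ≤ B) (hD : 1 ≤ D)
    (hP : ∃ j, P j ≠ 0)
    (hdeg : ∀ j, (P j).natDegree ≤ D) (hcoef : ∀ j n, ((P j).coeff n).natAbs ≤ B)
    (β₁ β₂ : ℚ) (hβ : B < β₂.den) :
    ∃ i : ℕ, (hasseDeriv i (∑ j : Fin (s + 1), β₂ ^ (j : ℕ) •
        (P j).map (Int.castRingHom ℚ))).eval β₁ ≠ 0 ∧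
      β₁.den ^ (i - s) ≤ (s + 1).factorial * (B * D ^ s) ^ (s + 1) * 2 ^ ((s + 1) * D) := by
  classical
  set F := ∑ j : Fin (s + 1), β₂ ^ (j : ℕ) • (P j).map (Int.castRingHom ℚ) with hF
  have hF0 : F ≠ 0 := by
    intro h0
    obtain ⟨j0, hj0⟩ := hP
    obtain ⟨n, hn⟩ : ∃ n, (P j0).coeff n ≠ 0 := by
      by_contra hcon
      push Not at hcon
      exact hj0 (Polynomial.ext (by simpa using hcon))
    set g : ℤ[X] := ∑ j : Fin (s + 1), monomial (j : ℕ) ((P j).coeff n) with hg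
    have hgc : ∀ j : Fin (s + 1), g.coeff j = (P j).coeff n := by
      intro j
      simp only [hg, finsetSum_coeff, coeff_monomial]
      rw [Finset.sum_eq_single j]
      · simp
      · intro m _ hmn
        rw [if_neg (fun h => hmn (Fin.ext h))]
      · simp
    have hg0 : g ≠ 0 := by
      intro h
      apply hn
      rw [← hgc, h, coeff_zero]
    have hgb : ∀ m, (g.coeff m).natAbs ≤ B := by
      intro m
      rcases lt_or_ge m (s + 1) with hm | hm
      · have := hgc ⟨m, hm⟩
        simp only at this
        rw [this]
        exact hcoef _ _
      · have : g.coeff m = 0 := by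
          simp only [hg, finsetSum_coeff, coeff_monomial]
          apply Finset.sum_eq_zero
          intro j _
          rw [if_neg (by have := j.2; omega)]
        simp [this]
    have hroot : (X - C β₂) ^ 1 ∣ g.map (Int.castRingHom ℚ) := by
      rw [pow_one, dvd_iff_isRoot, IsRoot]
      have : F.coeff n = 0 := by rw [h0, coeff_zero]
      rw [← this, hF, hg]
      simp [Polynomial.map_sum, eval_finsetSum, finsetSum_coeff, mul_comm]
    have h1 := dy_gauss g β₂ 1 hroot
    rw [pow_one] at h1
    have h2 := Int.le_of_dvd (by simpa using hg0) ((dvd_abs _ _).mpr h1)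
    rw [Int.abs_eq_natAbs] at h2
    have h3 := hgb g.natDegree
    rw [coeff_natDegree] at h3
    omega
  have ht0 : taylor β₁ F ≠ 0 := by
    intro h
    exact hF0 (taylor_injective β₁ (by rw [h, map_zero]))
  set i := (taylor β₁ F).natTrailingDegree with hi
  refine ⟨i, ?_, ?_⟩
  · rw [← taylor_coeff]
    have : (taylor β₁ F).trailingCoeff ≠ 0 := by simpa [trailingCoeff_eq_zero] using ht0
    exact this
  · refine dy_wronsk_bound P B D hB hD hdeg hcoef (fun j => β₂ ^ (j : ℕ)) hF0 β₁ i ?_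
    change _ ∣ F
    rw [X_sub_C_pow_dvd_iff, ← taylor_apply, X_pow_dvd_iff]
    intro m hm
    exact coeff_eq_zero_of_lt_natTrailingDegree hm

lemma dy_int_val (p : ℤ[X]) (D : ℕ) (hp : p.natDegree ≤ D) (β : ℚ) :
    ∃ z : ℤ, (β.den : ℚ) ^ D * (p.map (Int.castRingHom ℚ)).eval β = z := by
  refine ⟨∑ n ∈ Finset.range (D + 1), p.coeff n * β.num ^ n * (β.den : ℤ) ^ (D - n), ?_⟩
  rw [eval_eq_sum_range' (n := D + 1) (lt_of_le_of_lt natDegree_map_le (by omega)),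
    Finset.mul_sum]
  push_cast
  apply Finset.sum_congr rfl
  intro n hn
  have hn' : n ≤ D := by
    have := Finset.mem_range.mp hn
    omega
  have h1 : (β.den : ℚ) ^ D = β.den ^ (D - n) * β.den ^ n := by
    rw [← pow_add, Nat.sub_add_cancel hn']
  have h2 : (β.num : ℚ) = β.den * β := (Rat.den_mul_eq_num β).symm
  rw [h1, h2, mul_pow]
  simp
  ring

lemma dy_hasse_map {R : Type*} [CommRing R] (p : ℤ[X]) (i : ℕ) :
    hasseDeriv i (p.map (Int.castRingHom R)) = (hasseDeriv i p).map (Int.castRingHom R) := by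
  ext n
  simp [hasseDeriv_coeff]

lemma dy_lower {s : ℕ} (P : Fin (s + 1) → ℤ[X]) (D : ℕ)
    (hdeg : ∀ j, (P j).natDegree ≤ D) (β₁ β₂ : ℚ) (i : ℕ)
    (hne : (hasseDeriv i (∑ j : Fin (s + 1), β₂ ^ (j : ℕ) •
        (P j).map (Int.castRingHom ℚ))).eval β₁ ≠ 0) :
    1 ≤ (β₁.den : ℚ) ^ D * (β₂.den : ℚ) ^ s * |(hasseDeriv i (∑ j : Fin (s + 1), β₂ ^ (j : ℕ) •
        (P j).map (Int.castRingHom ℚ))).eval β₁| := by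
  set v := (hasseDeriv i (∑ j : Fin (s + 1), β₂ ^ (j : ℕ) •
        (P j).map (Int.castRingHom ℚ))).eval β₁ with hv
  have hd1 : (0 : ℚ) < β₁.den := by exact_mod_cast β₁.den_pos
  have hd2 : (0 : ℚ) < β₂.den := by exact_mod_cast β₂.den_pos
  have h1 : ∀ j, ∃ z : ℤ, (β₁.den : ℚ) ^ D *
      ((hasseDeriv i (P j)).map (Int.castRingHom ℚ)).eval β₁ = z := fun j =>
    dy_int_val _ D ((natDegree_hasseDeriv_le _ _).trans (by have := hdeg j; omega)) β₁
  choose z hz using h1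
  have h2 : (β₁.den : ℚ) ^ D * (β₂.den : ℚ) ^ s * v =
      ((∑ j : Fin (s + 1), β₂.num ^ (j : ℕ) * (β₂.den : ℤ) ^ (s - (j : ℕ)) * z j : ℤ) : ℚ) := by
    rw [hv, map_sum, eval_finsetSum, Finset.mul_sum]
    push_cast
    apply Finset.sum_congr rfl
    intro j _
    rw [map_smul, dy_hasse_map, eval_smul, ← hz]
    have hn' : (j : ℕ) ≤ s := by
      have := j.2
      omega
    have h1 : (β₂.den : ℚ) ^ s = β₂.den ^ (s - (j : ℕ)) * β₂.den ^ (j : ℕ) := by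
      rw [← pow_add, Nat.sub_add_cancel hn']
    have h2 : (β₂.num : ℚ) = β₂.den * β₂ := (Rat.den_mul_eq_num β₂).symm
    rw [h1, h2, mul_pow, smul_eq_mul]
    ring
  have h3 : (β₁.den : ℚ) ^ D * (β₂.den : ℚ) ^ s * |v| = |(β₁.den : ℚ) ^ D * (β₂.den : ℚ) ^ s * v| := by
    rw [abs_mul, abs_of_pos (by positivity : 0 < (β₁.den : ℚ) ^ D * (β₂.den : ℚ) ^ s)]
  have h4 : (β₁.den : ℚ) ^ D * (β₂.den : ℚ) ^ s * v ≠ 0 := by positivity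
  rw [h3]
  rw [h2] at h4 ⊢
  have h5 := Int.one_le_abs (by exact_mod_cast h4 : (∑ j : Fin (s + 1),
    β₂.num ^ (j : ℕ) * (β₂.den : ℤ) ^ (s - (j : ℕ)) * z j) ≠ 0)
  exact_mod_cast h5

lemma dy_hasse_bound (G : ℝ[X]) (D : ℕ) (g : ℝ) (hdeg : G.natDegree ≤ D)
    (hg : ∀ n, |G.coeff n| ≤ g) (α : ℝ) (m : ℕ) :
    |(hasseDeriv m G).eval α| ≤ (D + 1) * (2 ^ D * g * (1 + |α|) ^ D) := by
  have hg0 : 0 ≤ g := (abs_nonneg _).trans (hg 0)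
  have ha1 : 1 ≤ 1 + |α| := by linarith [abs_nonneg α]
  rw [eval_eq_sum_range' (n := D + 1)
    (lt_of_le_of_lt (natDegree_hasseDeriv_le _ _) (by omega))]
  refine (Finset.abs_sum_le_sum_abs _ _).trans ?_
  have : ∀ n ∈ Finset.range (D + 1), |(hasseDeriv m G).coeff n * α ^ n| ≤
      2 ^ D * g * (1 + |α|) ^ D := by
    intro n _
    rw [hasseDeriv_coeff]
    rcases le_or_gt (n + m) D with h | h
    · rw [abs_mul, abs_mul, abs_pow]
      have h1 : |(((n + m).choose m : ℕ) : ℝ)| ≤ 2 ^ D := by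
        rw [abs_of_nonneg (by positivity)]
        have : (n + m).choose m ≤ 2 ^ D :=
          (Nat.choose_le_two_pow _ _).trans (Nat.pow_le_pow_right (by norm_num) h)
        exact_mod_cast this
      have h2 : |α| ^ n ≤ (1 + |α|) ^ D :=
        (pow_le_pow_left₀ (abs_nonneg _) (by linarith) n).trans
          (pow_le_pow_right₀ ha1 (by omega))
      have := hg (n + m)
      gcongr
    · rw [coeff_eq_zero_of_natDegree_lt (by omega)]
      simp only [mul_zero, zero_mul, abs_zero]
      positivity
  refine (Finset.sum_le_sum this).trans ?_
  simp

lemma dy_taylor_bound (G : ℝ[X]) (D : ℕ) (g : ℝ) (hdeg : G.natDegree ≤ D)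
    (hg : ∀ n, |G.coeff n| ≤ g) (α : ℝ) (A : ℕ)
    (hvan : ∀ m < A, (hasseDeriv m G).eval α = 0) (x : ℝ) (hx : |x - α| ≤ 1) (i : ℕ) :
    |(hasseDeriv i G).eval x| ≤
      (D + 1) * (2 ^ D * ((D + 1) * (2 ^ D * g * (1 + |α|) ^ D)) * |x - α| ^ (A - i)) := by
  have hg0 : 0 ≤ g := (abs_nonneg _).trans (hg 0)
  have hh0 := abs_nonneg (x - α)
  rw [← taylor_eval_sub α, eval_eq_sum_range' (n := D + 1)
    (by
      rw [natDegree_taylor]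
      exact lt_of_le_of_lt (natDegree_hasseDeriv_le _ _) (by omega))]
  refine (Finset.abs_sum_le_sum_abs _ _).trans ?_
  have : ∀ n ∈ Finset.range (D + 1), |(taylor α (hasseDeriv i G)).coeff n * (x - α) ^ n| ≤
      2 ^ D * ((D + 1) * (2 ^ D * g * (1 + |α|) ^ D)) * |x - α| ^ (A - i) := by
    intro n _
    have hcomp : hasseDeriv n (hasseDeriv i G) = ((n + i).choose n) • hasseDeriv (n + i) G := by
      rw [← LinearMap.comp_apply, hasseDeriv_comp]
      rfl
    rw [taylor_coeff, hcomp, eval_smul, nsmul_eq_mul]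
    rcases lt_or_ge (n + i) A with h | h
    · rw [hvan _ h]
      simp only [mul_zero, zero_mul, abs_zero]
      positivity
    rcases le_or_gt (n + i) D with h' | h'
    · rw [abs_mul, abs_mul, abs_pow]
      have h1 : |(((n + i).choose n : ℕ) : ℝ)| ≤ 2 ^ D := by
        rw [abs_of_nonneg (by positivity)]
        have : (n + i).choose n ≤ 2 ^ D :=
          (Nat.choose_le_two_pow _ _).trans (Nat.pow_le_pow_right (by norm_num) h')
        exact_mod_cast this
      have h2 := dy_hasse_bound G D g hdeg hg α (n + i)
      have h3 : |x - α| ^ n ≤ |x - α| ^ (A - i) := pow_le_pow_of_le_one hh0 hx (by omega)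
      gcongr
    · rw [hasseDeriv_eq_zero_of_lt_natDegree _ _ (by omega)]
      simp only [eval_zero, mul_zero, zero_mul, abs_zero]
      positivity
  refine (Finset.sum_le_sum this).trans ?_
  simp

lemma dy_upper {s T N : ℕ} (hN : 1 ≤ N) (K : ℕ) (P : Fin (s + 1) → ℤ[X])
    (hdeg : ∀ j, (P j).natDegree ≤ s * N) (hcoef : ∀ j n, ((P j).coeff n).natAbs ≤ K ^ N)
    (α : ℝ)
    (hvan : ∀ b < T, ∀ a < N * (T - b), ∑ j : Fin (s + 1), (((j : ℕ).choose b : ℕ) : ℝ) *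
        α ^ ((j : ℕ) - b) * (hasseDeriv a ((P j).map (Int.castRingHom ℝ))).eval α = 0)
    (β₁ β₂ : ℚ) (θ : ℝ) (hθ1 : θ ≤ 1) (h1 : |(β₁ : ℝ) - α| ≤ θ)
    (h2 : |(β₂ : ℝ) - α| ≤ θ ^ N) (i : ℕ) :
    |(((hasseDeriv i (∑ j : Fin (s + 1), β₂ ^ (j : ℕ) •
        (P j).map (Int.castRingHom ℚ))).eval β₁ : ℚ) : ℝ)| ≤
      ((128 * (1 + |α|) ^ 2) ^ s * K) ^ N * θ ^ (N * T - i) := by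
  have hθ0 : 0 ≤ θ := (abs_nonneg _).trans h1
  have ha1 : 1 ≤ 1 + |α| := by linarith [abs_nonneg α]
  set D := s * N with hD
  set a := 1 + |α| with ha
  let G : ℕ → ℝ[X] := fun b => ∑ j : Fin (s + 1), ((((j : ℕ).choose b : ℕ) : ℝ) *
    α ^ ((j : ℕ) - b)) • (P j).map (Int.castRingHom ℝ)
  have hval : (((hasseDeriv i (∑ j : Fin (s + 1), β₂ ^ (j : ℕ) •
        (P j).map (Int.castRingHom ℚ))).eval β₁ : ℚ) : ℝ) =
      ∑ b ∈ Finset.range (s + 1), ((β₂ : ℝ) - α) ^ b * (hasseDeriv i (G b)).eval (β₁ : ℝ) := by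
    have e1 : ∀ j, ((((hasseDeriv i (P j)).map (Int.castRingHom ℚ)).eval β₁ : ℚ) : ℝ) =
        ((hasseDeriv i (P j)).map (Int.castRingHom ℝ)).eval (β₁ : ℝ) := by
      intro j
      have := Polynomial.eval_map (Rat.castHom ℝ) (p := (hasseDeriv i (P j)).map (Int.castRingHom ℚ)) (β₁ : ℝ)
      rw [Polynomial.map_map] at this
      have hc : (Rat.castHom ℝ).comp (Int.castRingHom ℚ) = Int.castRingHom ℝ := RingHom.ext_int _ _
      rw [hc] at this
      rw [this]
      have h := Polynomial.hom_eval₂ ((hasseDeriv i (P j)).map (Int.castRingHom ℚ)) (RingHom.id ℚ) (Rat.castHom ℝ) β₁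
      simpa [eval₂_eq_eval_map] using h
    have e2 : ∀ j : Fin (s + 1), (β₂ : ℝ) ^ (j : ℕ) = ∑ b ∈ Finset.range (s + 1),
        ((β₂ : ℝ) - α) ^ b * ((((j : ℕ).choose b : ℕ) : ℝ) * α ^ ((j : ℕ) - b)) := by
      intro j
      have hj := j.2
      conv_lhs => rw [← sub_add_cancel (β₂ : ℝ) α, add_pow]
      rw [← Finset.sum_subset (Finset.range_mono (show (j : ℕ) + 1 ≤ s + 1 by omega))]
      · apply Finset.sum_congr rfl
        intro b _
        ring
      · intro b _ hb
        rw [Nat.choose_eq_zero_of_lt (by simp at hb; omega)]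
        simp
    rw [map_sum, eval_finsetSum, Rat.cast_sum]
    simp only [G, map_sum, eval_finsetSum, map_smul, eval_smul, smul_eq_mul, dy_hasse_map,
      Rat.cast_mul, Rat.cast_pow, e1]
    simp_rw [Finset.mul_sum]
    rw [Finset.sum_comm]
    apply Finset.sum_congr rfl
    intro j _
    rw [e2, Finset.sum_mul]
    apply Finset.sum_congr rfl
    intro b _
    ring
  set g : ℝ := (s + 1) * (2 ^ s * a ^ s * K ^ N) with hg
  have hGc : ∀ b n, |(G b).coeff n| ≤ g := by
    intro b n
    simp only [G, finsetSum_coeff, coeff_smul, coeff_map, smul_eq_mul, eq_intCast]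
    refine (Finset.abs_sum_le_sum_abs _ _).trans ?_
    have : ∀ j ∈ (Finset.univ : Finset (Fin (s + 1))), |(((j : ℕ).choose b : ℕ) : ℝ) *
        α ^ ((j : ℕ) - b) * ((P j).coeff n : ℝ)| ≤ 2 ^ s * a ^ s * K ^ N := by
      intro j _
      have hj := j.2
      rw [abs_mul, abs_mul, abs_pow]
      have t1 : |(((j : ℕ).choose b : ℕ) : ℝ)| ≤ 2 ^ s := by
        rw [abs_of_nonneg (by positivity)]
        have : (j : ℕ).choose b ≤ 2 ^ s :=
          (Nat.choose_le_two_pow _ _).trans (Nat.pow_le_pow_right (by norm_num) (by omega))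
        exact_mod_cast this
      have t2 : |α| ^ ((j : ℕ) - b) ≤ a ^ s :=
        (pow_le_pow_left₀ (abs_nonneg _) (by linarith) _).trans
          (pow_le_pow_right₀ ha1 (by omega))
      have t3 : |((P j).coeff n : ℝ)| ≤ (K : ℝ) ^ N := by
        rw [← Int.cast_abs, Int.abs_eq_natAbs]
        exact_mod_cast hcoef j n
      gcongr
    refine (Finset.sum_le_sum this).trans ?_
    simp [hg]
  have hGd : ∀ b, (G b).natDegree ≤ D := by
    intro b
    apply natDegree_sum_le_of_forall_le
    intro j _
    exact (natDegree_smul_le _ _).trans (natDegree_map_le.trans (hdeg j))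
  have hGv : ∀ b, ∀ m < N * (T - b), (hasseDeriv m (G b)).eval α = 0 := by
    intro b m hm
    have hb : b < T := by
      by_contra hcon
      rw [Nat.sub_eq_zero_of_le (by omega)] at hm
      simp at hm
    have := hvan b hb m hm
    simpa only [G, map_sum, eval_finsetSum, map_smul, eval_smul, smul_eq_mul] using this
  have hg0 : 0 ≤ g := by positivity
  set c : ℝ := (D + 1) * (2 ^ D * ((D + 1) * (2 ^ D * g * a ^ D))) with hc
  have hterm : ∀ b ∈ Finset.range (s + 1),
      |((β₂ : ℝ) - α) ^ b * (hasseDeriv i (G b)).eval (β₁ : ℝ)| ≤ c * θ ^ (N * T - i) := by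
    intro b _
    have t1 := dy_taylor_bound (G b) D g (hGd b) (hGc b) α (N * (T - b)) (hGv b) β₁
      (h1.trans hθ1) i
    rw [abs_mul, abs_pow]
    have t2 : |(β₂ : ℝ) - α| ^ b ≤ θ ^ (N * b) := by
      rw [pow_mul]
      exact pow_le_pow_left₀ (abs_nonneg _) h2 b
    have t3 : |(β₁ : ℝ) - α| ^ (N * (T - b) - i) ≤ θ ^ (N * (T - b) - i) :=
      pow_le_pow_left₀ (abs_nonneg _) h1 _
    have hexp : N * T - i ≤ N * b + (N * (T - b) - i) := by
      have : N * T ≤ N * b + N * (T - b) := by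
        rw [← Nat.mul_add]
        exact Nat.mul_le_mul_left _ (by omega)
      omega
    calc |(β₂ : ℝ) - α| ^ b * |(hasseDeriv i (G b)).eval (β₁ : ℝ)|
        ≤ θ ^ (N * b) * ((D + 1) * (2 ^ D * ((D + 1) * (2 ^ D * g * a ^ D)) *
          θ ^ (N * (T - b) - i))) := by
          refine mul_le_mul t2 (t1.trans ?_) (abs_nonneg _) (by positivity)
          gcongr
      _ = c * θ ^ (N * b + (N * (T - b) - i)) := by rw [hc, pow_add]; ring
      _ ≤ _ := by
          apply mul_le_mul_of_nonneg_left _ (by positivity)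
          exact pow_le_pow_of_le_one hθ0 hθ1 hexp
  rw [hval]
  refine (Finset.abs_sum_le_sum_abs _ _).trans ((Finset.sum_le_sum hterm).trans ?_)
  rw [Finset.sum_const, Finset.card_range, nsmul_eq_mul, ← mul_assoc]
  apply mul_le_mul_of_nonneg_right _ (by positivity)
  have hsD : s ≤ D := Nat.le_mul_of_pos_right _ hN
  have hp : ∀ n : ℕ, ((n : ℝ) + 1) ≤ 2 ^ n := by
    intro n
    have : n + 1 ≤ 2 ^ n := Nat.lt_two_pow_self
    exact_mod_cast this
  have hs1 : ((s : ℝ) + 1) ≤ 2 ^ D := (hp s).trans (pow_le_pow_right₀ (by norm_num) hsD)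
  have hs2 : (2 : ℝ) ^ s ≤ 2 ^ D := pow_le_pow_right₀ (by norm_num) hsD
  have hs3 : a ^ s ≤ a ^ D := pow_le_pow_right₀ ha1 hsD
  have hD1 := hp D
  rw [hc, hg]
  push_cast
  calc ((s : ℝ) + 1) * ((D + 1) * (2 ^ D * ((D + 1) * (2 ^ D * ((s + 1) * (2 ^ s * a ^ s * K ^ N)) *
        a ^ D))))
      ≤ 2 ^ D * (2 ^ D * (2 ^ D * (2 ^ D * (2 ^ D * (2 ^ D * (2 ^ D * a ^ D * K ^ N)) *
        a ^ D)))) := by gcongr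
    _ = (2 ^ D) ^ 7 * (a ^ D) ^ 2 * K ^ N := by ring
    _ = _ := by
      rw [mul_pow _ (K : ℝ) N, ← pow_mul (128 * a ^ 2) s N, ← hD, mul_pow, ← pow_mul, ← pow_mul,
        ← pow_mul]
      have : (128 : ℝ) = 2 ^ 7 := by norm_num
      rw [this, ← pow_mul, mul_comm D 7, mul_comm D 2]

lemma dy_pow_bound (s K N : ℕ) (hN : 1 ≤ N) :
    (s + 1).factorial * (K ^ N * (s * N) ^ s) ^ (s + 1) * 2 ^ ((s + 1) * (s * N)) ≤
      ((s + 1).factorial * (K * (s * 2) ^ s) ^ (s + 1) * 2 ^ ((s + 1) * s)) ^ N := by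
  have h1 : (s + 1).factorial ≤ (s + 1).factorial ^ N := Nat.le_self_pow (by omega) _
  have h2 : s * N ≤ (s * 2) ^ N := by
    rw [mul_pow]
    exact Nat.mul_le_mul (Nat.le_self_pow (by omega) _) Nat.lt_two_pow_self.le
  calc _ ≤ (s + 1).factorial ^ N * (K ^ N * ((s * 2) ^ N) ^ s) ^ (s + 1) *
        2 ^ ((s + 1) * (s * N)) := by gcongr
    _ = _ := by
      generalize (s + 1).factorial = F
      generalize s * 2 = u
      simp only [mul_pow, ← pow_mul]
      ring

set_option maxHeartbeats 1000000 in
lemma dy_main (f : ℤ[X]) (d : ℕ) (hd : f.natDegree = d) (hd1 : 1 ≤ d) (α : ℝ)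
    (hα : aeval α f = 0) (s T : ℕ) (hT : 1 ≤ T) (hs : 1 ≤ s)
    (hsT : d * T * (T + 1) < 2 * (s * (s + 1)))
    (ρ : ℝ) (hρ : 0 < ρ) (hρT : 2 * s < ρ * T) :
    ∃ Q : ℕ, ∀ β : ℚ, |(β : ℝ) - α| ≤ (β.den : ℝ) ^ (-ρ) → β.den < Q := by
  obtain ⟨K, hK1, hK⟩ := dy_aux f d hd hd1 α hα s T hT hsT
  set K2 := (s + 1).factorial * (K * (s * 2) ^ s) ^ (s + 1) * 2 ^ ((s + 1) * s) with hK2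
  set K4 : ℝ := (128 * (1 + |α|) ^ 2) ^ s * K with hK4
  have hK4pos : 0 < K4 := by positivity
  set δ := ρ * T - 2 * s with hδ
  have hδ0 : 0 < δ := by linarith
  obtain ⟨m, hm⟩ := exists_nat_gt (2 * (1 + ρ) / δ)
  rw [div_lt_iff₀ hδ0] at hm
  have hm0 : 0 < (m : ℝ) := by
    by_contra hcon
    nlinarith
  obtain ⟨Q4, hQ4⟩ := exists_nat_gt (K4 ^ m)
  set Q0 := 2 + K + K2 ^ m + Q4 with hQ0
  by_cases hex : ∃ β : ℚ, |(β : ℝ) - α| ≤ (β.den : ℝ) ^ (-ρ) ∧ Q0 ≤ β.den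
  swap
  · push Not at hex
    exact ⟨Q0, hex⟩
  obtain ⟨β₁, hβ₁, hQ1⟩ := hex
  obtain ⟨N0, hN0⟩ := exists_nat_gt (2 * s * (1 + ρ) / δ)
  rw [div_lt_iff₀ hδ0] at hN0
  set q₁ := β₁.den with hq₁
  refine ⟨q₁ ^ (N0 + 1), fun β₂ hβ₂ => ?_⟩
  by_contra hcon
  push Not at hcon
  set q₂ := β₂.den with hq₂
  set N := Nat.log q₁ q₂ with hNdef
  have hq12 : 2 ≤ q₁ := by omega
  have hN0N : N0 + 1 ≤ N := Nat.le_log_of_pow_le (by omega) hcon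
  have hN : 1 ≤ N := by omega
  have hlo : q₁ ^ N ≤ q₂ := Nat.pow_log_le_self _ β₂.den_nz
  have hhi : q₂ < q₁ ^ (N + 1) := Nat.lt_pow_succ_log_self (by omega) _
  obtain ⟨P, hP0, hPd, hPc, hPv⟩ := hK N hN
  have hKq : K ^ N < q₂ := lt_of_lt_of_le (Nat.pow_lt_pow_left (by omega) (by omega)) hlo
  obtain ⟨i, hi, hib⟩ := dy_nonvanish P (K ^ N) (s * N) (Nat.one_le_pow _ _ hK1)
    (Nat.mul_pos hs hN) hP0 hPd hPc β₁ β₂ hKq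
  have hib2 : q₁ ^ (i - s) ≤ K2 ^ N := hib.trans (dy_pow_bound s K N hN)
  have him : (i - s) * m ≤ N := by
    have h1 : q₁ ^ ((i - s) * m) ≤ q₁ ^ N := by
      calc q₁ ^ ((i - s) * m) = (q₁ ^ (i - s)) ^ m := by rw [pow_mul]
        _ ≤ (K2 ^ N) ^ m := Nat.pow_le_pow_left hib2 m
        _ = (K2 ^ m) ^ N := by rw [← pow_mul, ← pow_mul, mul_comm]
        _ ≤ q₁ ^ N := Nat.pow_le_pow_left (by omega) N
    exact (Nat.pow_le_pow_iff_right (by omega)).mp h1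
  have hq1R : (1 : ℝ) < q₁ := by exact_mod_cast (by omega : 1 < q₁)
  have hq1pos : (0 : ℝ) < q₁ := by linarith
  set θ : ℝ := (q₁ : ℝ) ^ (-ρ) with hθ
  have hθpos : 0 < θ := Real.rpow_pos_of_pos hq1pos _
  have hθ1 : θ ≤ 1 := Real.rpow_le_one_of_one_le_of_nonpos hq1R.le (by linarith)
  have hβ₂' : |(β₂ : ℝ) - α| ≤ θ ^ N := by
    refine hβ₂.trans ?_
    have h1 : ((q₁ : ℝ) ^ N) ≤ q₂ := by exact_mod_cast hlo
    calc (q₂ : ℝ) ^ (-ρ) ≤ ((q₁ : ℝ) ^ N) ^ (-ρ) :=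
          Real.rpow_le_rpow_of_nonpos (by positivity) h1 (by linarith)
      _ = θ ^ N := by
          rw [hθ, ← Real.rpow_natCast, ← Real.rpow_natCast, ← Real.rpow_mul hq1pos.le,
            ← Real.rpow_mul hq1pos.le, mul_comm]
  have hup := dy_upper hN K P hPd hPc α hPv β₁ β₂ θ hθ1 hβ₁ hβ₂' i
  have hlow := dy_lower P (s * N) hPd β₁ β₂ i hi
  set v := (hasseDeriv i (∑ j : Fin (s + 1), β₂ ^ (j : ℕ) •
        (P j).map (Int.castRingHom ℚ))).eval β₁ with hv
  have hlowR : (1 : ℝ) ≤ (q₁ : ℝ) ^ (s * N) * (q₂ : ℝ) ^ s * |(v : ℝ)| := by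
    exact_mod_cast hlow
  have hq2 : (q₂ : ℝ) ^ s ≤ (q₁ : ℝ) ^ ((N + 1) * s) := by
    rw [pow_mul]
    apply pow_le_pow_left₀ (by positivity)
    exact_mod_cast hhi.le
  have hfin : (1 : ℝ) ≤ (q₁ : ℝ) ^ (s * N) * (q₁ : ℝ) ^ ((N + 1) * s) *
      (K4 ^ N * θ ^ (N * T - i)) := by
    refine hlowR.trans ?_
    gcongr
  have hlog := Real.log_le_log one_pos hfin
  rw [Real.log_one, Real.log_mul (by positivity) (by positivity),
    Real.log_mul (by positivity) (by positivity), Real.log_mul (by positivity) (by positivity),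
    Real.log_pow, Real.log_pow, Real.log_pow, Real.log_pow, hθ, Real.log_rpow hq1pos] at hlog
  set l := Real.log q₁ with hl
  have hl0 : 0 < l := Real.log_pos hq1R
  have hK4l : m * Real.log K4 ≤ l := by
    rw [← Real.log_pow]
    apply Real.log_le_log (by positivity)
    refine hQ4.le.trans ?_
    exact_mod_cast (by omega : Q4 ≤ q₁)
  have hiR : ((i : ℝ) - s) * m ≤ N := by
    have h1 : (i : ℝ) - s ≤ ((i - s : ℕ) : ℝ) := by
      have : i ≤ (i - s) + s := by omega
      have : (i : ℝ) ≤ ((i - s : ℕ) : ℝ) + s := by exact_mod_cast this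
      linarith
    have h2 : (((i - s : ℕ) : ℝ)) * m ≤ N := by exact_mod_cast him
    exact (mul_le_mul_of_nonneg_right h1 hm0.le).trans h2
  have hNT : (N : ℝ) * T - i ≤ ((N * T - i : ℕ) : ℝ) := by
    have : N * T ≤ (N * T - i) + i := by omega
    have : (N : ℝ) * T ≤ ((N * T - i : ℕ) : ℝ) + i := by exact_mod_cast this
    linarith
  have hNR : (N0 : ℝ) + 1 ≤ N := by exact_mod_cast hN0N
  have hNpos : (0 : ℝ) < N := by exact_mod_cast hN
  push_cast at hlog
  -- divide by l, multiply by m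
  have h1 : ((N * T - i : ℕ) : ℝ) * (-ρ * l) ≤ ((N : ℝ) * T - i) * (-ρ * l) := by
    apply mul_le_mul_of_nonpos_right hNT
    have := mul_pos hρ hl0
    linarith
  have h2 : 0 ≤ (m : ℝ) * ((s * N) * l + ((N + 1) * s) * l + ((N : ℝ) * T - i) * (-ρ * l)) +
      N * l := by
    have h3 : 0 ≤ (m : ℝ) * ((s * N) * l + ((N + 1) * s) * l + (N * Real.log K4 +
      ((N : ℝ) * T - i) * (-ρ * l))) := by
      apply mul_nonneg hm0.le
      linarith
    have h4 : (N : ℝ) * (m * Real.log K4) ≤ N * l := mul_le_mul_of_nonneg_left hK4l hNpos.le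
    linarith
  have h3 : 0 ≤ (m : ℝ) * (s * N + (N + 1) * s - ρ * (N * T - i)) + N := by
    have : 0 ≤ ((m : ℝ) * (s * N + (N + 1) * s - ρ * (N * T - i)) + N) * l := by
      linarith
    exact nonneg_of_mul_nonneg_left this hl0
  have h4 : (m : ℝ) * i ≤ N + s * m := by linarith
  have h5 : ρ * ((m : ℝ) * i) ≤ ρ * (N + s * m) := mul_le_mul_of_nonneg_left h4 hρ.le
  have h6 : (m : ℝ) * N * δ ≤ m * (s * (1 + ρ)) + N * (1 + ρ) := by
    rw [hδ]
    linarith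
  have h7 : N * (2 * (1 + ρ)) < N * (m * δ) := by
    apply mul_lt_mul_of_pos_left hm hNpos
  have h8 : (m : ℝ) * (2 * s * (1 + ρ)) < m * (N * δ) := by
    apply mul_lt_mul_of_pos_left _ hm0
    refine hN0.trans_le ?_
    apply mul_le_mul_of_nonneg_right _ hδ0.le
    linarith
  linarith

lemma dy_choose (d : ℕ) (hd : 1 ≤ d) (ρ : ℝ) (hρ : Real.sqrt (2 * d) < ρ) :
    ∃ s T : ℕ, 1 ≤ T ∧ 1 ≤ s ∧ d * T * (T + 1) < 2 * (s * (s + 1)) ∧ 2 * (s : ℝ) < ρ * T := by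
  have hρ0 : 0 < ρ := lt_of_le_of_lt (Real.sqrt_nonneg _) hρ
  have hsq : 2 * (d : ℝ) < ρ ^ 2 := by
    have := (Real.sqrt_lt' hρ0).mp hρ
    exact this
  set η := ρ ^ 2 / 2 - d with hη
  have hη0 : 0 < η := by linarith
  obtain ⟨T, hT⟩ := exists_nat_gt (max 1 (max ((d + ρ) / η) (4 / ρ)))
  have hT1 : (1 : ℝ) < T := lt_of_le_of_lt (le_max_left _ _) hT
  have hT2 : (d + ρ) / η < T :=
    lt_of_le_of_lt ((le_max_left _ _).trans (le_max_right _ _)) hT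
  have hT3 : 4 / ρ < T :=
    lt_of_le_of_lt ((le_max_right _ _).trans (le_max_right _ _)) hT
  rw [div_lt_iff₀ hη0] at hT2
  rw [div_lt_iff₀ hρ0] at hT3
  set n := ⌈ρ * T / 2⌉₊ with hn
  have hn1 : ρ * T / 2 ≤ n := Nat.le_ceil _
  have hn2 : (n : ℝ) < ρ * T / 2 + 1 := Nat.ceil_lt_add_one (by positivity)
  have hn3 : 2 ≤ n := by
    have : (2 : ℝ) ≤ n := by linarith
    exact_mod_cast this
  obtain ⟨s, hs⟩ : ∃ s, n = s + 1 := ⟨n - 1, by omega⟩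
  rw [hs] at hn1 hn2
  push_cast at hn1 hn2
  refine ⟨s, T, ?_, by omega, ?_, by linarith⟩
  · have : (1 : ℝ) ≤ T := hT1.le
    exact_mod_cast this
  · have key : (d : ℝ) * T * (T + 1) < 2 * (s * (s + 1)) := by
      have h1 : (ρ * T / 2 - 1) * (ρ * T / 2) ≤ s * (s + 1) := by
        apply mul_le_mul (by linarith) hn1 (by positivity) (by positivity)
      have h2 : T * (d + ρ) < T * (T * η) := mul_lt_mul_of_pos_left hT2 (by linarith)
      rw [hη] at h2
      nlinarith
    exact_mod_cast key

theorem dyson_theorem (α : ℝ) (hα : IsAlgebraic ℚ α) (d : ℕ)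
    (hd : (minpoly ℚ α).natDegree = d) (hd3 : 3 ≤ d)
    (ρ : ℝ) (hρ : Real.sqrt (2 * d) < ρ) :
    {pq : ℤ × ℤ | 1 ≤ pq.2 ∧ (pq.2 : ℝ) ^ ρ * |(pq.2 : ℝ) * α - (pq.1 : ℝ)| ≤ 1}.Finite := by
  have hρ0 : 0 < ρ := lt_of_le_of_lt (Real.sqrt_nonneg _) hρ
  have hirr : Irrational α := by
    rintro ⟨r, hr⟩
    have h1 : minpoly ℚ α = X - C r := by
      rw [← hr]
      exact minpoly.eq_X_sub_C ℝ r
    rw [h1, natDegree_X_sub_C] at hd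
    omega
  obtain ⟨c, hc0, hc⟩ := IsLocalization.integerNormalization_spec (nonZeroDivisors ℤ) (minpoly ℚ α)
  set f : ℤ[X] := IsLocalization.integerNormalization (nonZeroDivisors ℤ) (minpoly ℚ α) with hf
  have hmp0 : minpoly ℚ α ≠ 0 := minpoly.ne_zero hα.isIntegral
  have hfmap : f.map (algebraMap ℤ ℚ) = C (c : ℚ) * minpoly ℚ α := by
    rw [hc]
    ext n
    simp
  have hc0' : (c : ℚ) ≠ 0 := by
    have := nonZeroDivisors.ne_zero hc0
    exact_mod_cast this
  have hfd : f.natDegree = d := by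
    rw [← hd, ← natDegree_map_eq_of_injective (algebraMap ℤ ℚ).injective_int f, hfmap,
      natDegree_C_mul hc0']
  have hfα : aeval α f = 0 := by
    rw [← aeval_map_algebraMap ℚ, hfmap]
    simp
  obtain ⟨s, T, hT, hs, hsT, hρT⟩ := dy_choose d (by omega) ρ hρ
  obtain ⟨Q, hQ⟩ := dy_main f d hfd (by omega) α hfα s T hT hs hsT ρ hρ0 hρT
  set W : ℕ := Q.factorial with hW
  have hW0 : 0 < (W : ℝ) := by
    have := Nat.factorial_pos Q
    exact_mod_cast this
  set δ : ℝ := |α * W - round (α * W)| / W with hδ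
  have hδ0 : 0 < δ := by
    apply div_pos _ hW0
    rw [abs_pos, sub_ne_zero]
    have : Irrational (α * W) := hirr.mul_natCast (Nat.factorial_ne_zero Q)
    exact this.ne_int _
  obtain ⟨B, hB⟩ := exists_nat_gt (1 / δ)
  obtain ⟨B', hB'⟩ := exists_nat_gt ((B : ℝ) * |α| + 1)
  apply Set.Finite.subset (Set.Finite.prod (Set.finite_Icc (-(B' : ℤ)) B') (Set.finite_Icc (1 : ℤ) B))
  rintro ⟨p, q⟩ ⟨hq1, hpq⟩
  simp only at hq1 hpq
  have hq1R : (1 : ℝ) ≤ q := by exact_mod_cast hq1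
  have hq0 : (0 : ℝ) < q := by linarith
  have hqρ : 1 ≤ (q : ℝ) ^ ρ := Real.one_le_rpow hq1R hρ0.le
  have hqρ0 : 0 < (q : ℝ) ^ ρ := by linarith
  have habs : |(q : ℝ) * α - p| ≤ (q : ℝ) ^ (-ρ) := by
    rw [Real.rpow_neg hq0.le, ← one_div, le_div_iff₀ hqρ0]
    linarith
  have habs1 : |(q : ℝ) * α - p| ≤ 1 := by
    refine habs.trans ?_
    exact Real.rpow_le_one_of_one_le_of_nonpos hq1R (by linarith)
  set β : ℚ := (p : ℚ) / q with hβ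
  have hβR : (β : ℝ) = p / q := by rw [hβ]; push_cast; rfl
  have hdiff : |(q : ℝ) * α - p| = q * |(β : ℝ) - α| := by
    rw [← abs_of_pos hq0, ← abs_mul, abs_of_pos hq0, hβR, abs_sub_comm]
    congr 1
    field_simp
  have hden : (β.den : ℤ) ≤ q := by
    apply Int.le_of_dvd (by omega)
    rw [hβ]
    rw [← Rat.divInt_eq_div]
    exact Rat.den_dvd p q
  have hdenR : (β.den : ℝ) ≤ q := by exact_mod_cast hden
  have hdpos : (0 : ℝ) < β.den := by exact_mod_cast β.den_pos
  have hle : |(β : ℝ) - α| ≤ |(q : ℝ) * α - p| := by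
    rw [hdiff]
    exact le_mul_of_one_le_left (abs_nonneg _) hq1R
  have hgood : |(β : ℝ) - α| ≤ (β.den : ℝ) ^ (-ρ) :=
    hle.trans (habs.trans (Real.rpow_le_rpow_of_nonpos hdpos hdenR (by linarith)))
  have hdQ := hQ β hgood
  have hδle : δ ≤ |(β : ℝ) - α| := by
    obtain ⟨k, hk⟩ : β.den ∣ W := Nat.dvd_factorial β.den_pos hdQ.le
    have hbW : (β : ℝ) * W = ((β.num * k : ℤ) : ℝ) := by
      have h1 : (β : ℝ) * β.den = β.num := by exact_mod_cast Rat.mul_den_eq_num β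
      rw [hk]
      push_cast
      rw [← h1]
      ring
    rw [hδ, div_le_iff₀ hW0]
    refine (round_le (α * W) (β.num * k)).trans (le_of_eq ?_)
    rw [← hbW, ← sub_mul, abs_mul, abs_of_pos hW0, abs_sub_comm]
  have hqB : (q : ℝ) < B := by
    have h1 : q * δ ≤ 1 := by
      calc q * δ ≤ q * |(β : ℝ) - α| := mul_le_mul_of_nonneg_left hδle hq0.le
        _ = _ := hdiff.symm
        _ ≤ 1 := habs1
    refine lt_of_le_of_lt ?_ hB
    rwa [le_div_iff₀ hδ0]
  have hpB : |(p : ℝ)| ≤ B' := by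
    have h1 : |(p : ℝ)| ≤ |(q : ℝ) * α| + 1 := by
      have := abs_sub_abs_le_abs_sub (p : ℝ) (q * α)
      rw [abs_sub_comm] at this
      linarith
    rw [abs_mul, abs_of_pos hq0] at h1
    have h2 : (q : ℝ) * |α| ≤ B * |α| := mul_le_mul_of_nonneg_right hqB.le (abs_nonneg _)
    linarith
  have hpB' : |p| ≤ (B' : ℤ) := by exact_mod_cast hpB
  refine ⟨⟨(abs_le.mp hpB').1, (abs_le.mp hpB').2⟩, ⟨hq1, ?_⟩⟩
  exact_mod_cast hqB.le
end

section
/- There is no Weierstrass equation y² + a₁xy + a₃y = x³ + a₂x² + a₄x + a₆ with integer coefficients a₁, a₂, a₃, a₄, a₆ whose discriminant Δ is equal to 1 or to −1. (This is the elliptic-curve case of the nonexistence, conjectured by Shafarevich and proved by Fontaine, of abelian varieties over ℚ with good reduction at every prime.) -/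
/-- If `u ≡ 5 mod 8`, then `u (u² + 36 e u + 432)` is not a square for `e = ±1`. -/
lemma key_not_square (u e z : ℤ) (he : e ^ 2 = 1) (hu : u % 8 = 5)
    (h : u * (u ^ 2 + 36 * e * u + 432) = z ^ 2) : False := by
  have hv : 0 < u ^ 2 + 36 * e * u + 432 := by nlinarith [sq_nonneg (u + 18 * e)]
  have hu0 : 0 ≤ u := by
    by_contra hneg
    push Not at hneg
    nlinarith [sq_nonneg z, mul_pos (neg_pos.mpr hneg) hv]
  lift u to ℕ using hu0
  obtain ⟨k, w, hw, huw⟩ := Nat.exists_eq_pow_mul_and_not_dvd (n := u) (by omega) 3 (by norm_num)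
  have huZ : (u : ℤ) = 3 ^ k * (w : ℤ) := by rw [huw]; push_cast; ring
  have h3k : (3 : ℤ) ^ k % 8 = 1 ∨ (3 : ℤ) ^ k % 8 = 3 := by
    clear huw huZ
    induction k with
    | zero => left; norm_num
    | succ k ih => rw [pow_succ]; omega
  have hw8 : (w : ℤ) % 8 = 5 ∨ (w : ℤ) % 8 = 7 := by
    have h1 : (3 ^ k * (w : ℤ)) % 8 = 5 := by rw [← huZ]; exact hu
    rw [Int.mul_emod] at h1
    rcases h3k with h3 | h3 <;> rw [h3] at h1 <;> omega
  have hc3 : IsCoprime (w : ℤ) 3 := by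
    have : Nat.Coprime w 3 := ((Nat.Prime.coprime_iff_not_dvd Nat.prime_three).2 hw).symm
    exact_mod_cast this.isCoprime
  have hc2 : IsCoprime (w : ℤ) 2 := by
    have : Nat.Coprime w 2 := by
      refine ((Nat.Prime.coprime_iff_not_dvd Nat.prime_two).2 ?_).symm
      omega
    exact_mod_cast this.isCoprime
  have hc : IsCoprime (w : ℤ) (432 + w * (3 ^ k * (u + 36 * e))) := by
    rw [IsCoprime.add_mul_left_right_iff]
    have h432 : (432 : ℤ) = 2 ^ 4 * 3 ^ 3 := by norm_num
    rw [h432]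
    exact (hc2.pow_right).mul_right (hc3.pow_right)
  have hc' : IsCoprime (w : ℤ) (3 ^ k * (432 + w * (3 ^ k * (u + 36 * e)))) :=
    (hc3.pow_right).mul_right hc
  have hprod : (w : ℤ) * (3 ^ k * (432 + w * (3 ^ k * (u + 36 * e)))) = z ^ 2 := by
    rw [← h, huZ]; ring
  obtain ⟨s, hs⟩ := Int.sq_of_isCoprime hc' hprod
  have hs8 : s ^ 2 % 8 = 0 ∨ s ^ 2 % 8 = 1 ∨ s ^ 2 % 8 = 4 := by
    have : s % 8 = 0 ∨ s % 8 = 1 ∨ s % 8 = 2 ∨ s % 8 = 3 ∨ s % 8 = 4 ∨ s % 8 = 5 ∨ s % 8 = 6 ∨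
      s % 8 = 7 := by omega
    rcases this with h | h | h | h | h | h | h | h <;> simp [pow_two, Int.mul_emod, h]
  have hsn := sq_nonneg s
  rcases hs with hs | hs <;> omega

/-- If the discriminant is `±1` then `c₄ ≡ 1 mod 8`. -/
lemma c4_mod_eight (W : WeierstrassCurve ℤ) (h : W.Δ = 1 ∨ W.Δ = -1) : W.c₄ % 8 = 1 := by
  obtain ⟨a₁, a₂, a₃, a₄, a₆⟩ := W
  simp only [WeierstrassCurve.Δ, WeierstrassCurve.c₄, WeierstrassCurve.b₂, WeierstrassCurve.b₄,
    WeierstrassCurve.b₆, WeierstrassCurve.b₈] at h ⊢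
  rcases Int.even_or_odd' a₁ with ⟨m, rfl | rfl⟩
  · exfalso
    rcases Int.even_or_odd' a₃ with ⟨n, rfl | rfl⟩
    · ring_nf at h
      omega
    · have hn := Int.even_mul_succ_self n
      obtain ⟨r, hr⟩ := hn
      obtain ⟨q, hq⟩ : ∃ q : ℤ, (2 * n + 1) ^ 2 = 8 * q + 1 := ⟨r, by linear_combination 4 * hr⟩
      generalize 2 * n + 1 = a₃ at *
      rw [hq] at h
      ring_nf at h
      omega
  · obtain ⟨r, hr⟩ := Int.even_mul_succ_self m
    have : (2 * m + 1) ^ 2 = 8 * r + 1 := by linear_combination 4 * hr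
    rw [this]
    ring_nf
    omega

/-- There is no Weierstrass equation with integer coefficients whose discriminant is `1` or
`−1` (the elliptic-curve case of Fontaine's theorem: no abelian variety over `ℚ` has good
reduction at every prime). -/
theorem no_weierstrass_unit_discriminant (W : WeierstrassCurve ℤ) :
    W.Δ ≠ 1 ∧ W.Δ ≠ -1 := by
  have hrel := W.c_relation
  constructor
  · intro h
    have h8 := c4_mod_eight W (Or.inl h)
    rw [h] at hrel
    exact key_not_square (W.c₄ - 12) 1 W.c₆ (by norm_num) (by omega) (by linear_combination -hrel)
  · intro h
    have h8 := c4_mod_eight W (Or.inr h)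
    rw [h] at hrel
    exact key_not_square (W.c₄ + 12) (-1) W.c₆ (by norm_num) (by omega)
      (by linear_combination -hrel)
end

section
/- The Hermite–Minkowski finiteness theorem: for every positive integer n and every finite set S of prime numbers, the set of subfields K of ℂ that are number fields of degree at most n over ℚ and whose discriminant has all of its prime factors in S is finite. -/
open NumberField in
/-- If all positive power sums vanish, then `card! * s i ^ card = 0` (Newton's identities). -/
lemma hm_newton {R σ : Type*} [CommRing R] [Fintype σ] (s : σ → R)
    (h : ∀ j : ℕ, 0 < j → ∑ i, s i ^ j = 0) (i : σ) :
    ((Fintype.card σ).factorial : R) * s i ^ Fintype.card σ = 0 := by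
  classical
  have key : ∀ j : ℕ, (j : R) * (Finset.univ.val.map s).esymm j = 0 := by
    intro j
    have := congrArg (MvPolynomial.aeval s) (MvPolynomial.mul_esymm_eq_sum σ R j)
    rw [map_mul, MvPolynomial.aeval_esymm_eq_multiset_esymm, map_natCast] at this
    rw [this, map_mul, map_sum, Finset.sum_eq_zero, mul_zero]
    intro a ha
    rw [Finset.mem_filter, Finset.HasAntidiagonal.mem_antidiagonal] at ha
    have h2 : MvPolynomial.aeval s (MvPolynomial.psum σ R a.2) = 0 := by
      simp only [MvPolynomial.psum, map_sum, map_pow, MvPolynomial.aeval_X]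
      exact h _ (by omega)
    rw [map_mul, h2, mul_zero]
  have hp := congrArg (Polynomial.eval (s i))
    (Multiset.prod_X_sub_X_eq_sum_esymm (Finset.univ.val.map s))
  have hz : Polynomial.eval (s i) ((Finset.univ.val.map s).map
      fun t => Polynomial.X - Polynomial.C t).prod = 0 := by
    rw [Multiset.map_map]
    change Polynomial.eval (s i) (∏ j, (Polynomial.X - Polynomial.C (s j))) = 0
    rw [Polynomial.eval_prod]
    exact Finset.prod_eq_zero (Finset.mem_univ i) (by simp)
  rw [hz, Polynomial.eval_finsetSum, Multiset.card_map] at hp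
  change 0 = ∑ j ∈ Finset.range (Fintype.card σ + 1), _ at hp
  have hp2 := congrArg (fun t => ((Fintype.card σ).factorial : R) * t) hp
  simp only [mul_zero, Finset.mul_sum] at hp2
  rw [Finset.sum_range_succ', Finset.sum_eq_zero] at hp2
  · have hc : Multiset.card (Finset.univ : Finset σ).val = Fintype.card σ := rfl
    have he : (Multiset.map s Finset.univ.val).esymm 0 = 1 := by simp [Multiset.esymm]
    simp [hc, he] at hp2
    exact hp2.symm
  · intro j hj
    obtain ⟨c, hc⟩ := Nat.dvd_factorial (Nat.succ_pos j)
      (show j + 1 ≤ Fintype.card σ from Finset.mem_range.1 hj)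
    have hk := key (j + 1)
    rw [hc]
    simp only [Polynomial.eval_mul, Polynomial.eval_C, Polynomial.eval_pow, Polynomial.eval_neg,
      Polynomial.eval_one, Polynomial.eval_X]
    push_cast at hk ⊢
    linear_combination (c : R) * (-1) ^ (j + 1) *
      s i ^ (Multiset.card (Finset.univ : Finset σ).val - (j + 1)) * hk

/-- Primitive kernel vectors modulo prime powers bound the valuation of a determinant. -/
lemma hm_matrix {ι : Type*} [Fintype ι] [DecidableEq ι] [Nonempty ι] (M : Matrix ι ι ℤ)
    (p : ℤ) (hp : Prime p) (k : ℕ)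
    (hM : ∀ v : ι → ℤ, (∀ i, p ^ k ∣ (M.mulVec v) i) → ∀ i, p ∣ v i)
    (N : ℕ) (u : ℤ) (hu : ¬ p ∣ u) (hdet : M.det = p ^ N * u) : N ≤ Fintype.card ι * k := by
  have step : ∀ (j : ℕ) (v : ι → ℤ), (∀ i, p ^ (k + j) ∣ (M.mulVec v) i) → ∀ i, p ^ j ∣ v i := by
    intro j
    induction j with
    | zero => intro v _ i; simp
    | succ j ih =>
      intro v hv i
      have h1 := hM v (fun i => (pow_dvd_pow p (by omega)).trans (hv i))
      choose w hw using h1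
      have hvw : v = p • w := by ext i; simpa using hw i
      have h2 := ih w (fun i => by
        have := hv i
        rw [hvw, Matrix.mulVec_smul, Pi.smul_apply, smul_eq_mul, ← add_assoc, pow_succ',
          mul_dvd_mul_iff_left hp.ne_zero] at this
        exact this) i
      rw [hw i, pow_succ']
      exact mul_dvd_mul_left p h2
  rcases Nat.lt_or_ge N k with h | h
  · exact h.le.trans (Nat.le_mul_of_pos_left k Fintype.card_pos)
  obtain ⟨j, rfl⟩ := Nat.exists_eq_add_of_le h
  have hadj : ∀ b a, p ^ j ∣ M.adjugate a b := by
    intro b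
    refine step j (fun a => M.adjugate a b) ?_
    intro i
    have : (M.mulVec fun a => M.adjugate a b) i = (M * M.adjugate) i b := rfl
    rw [this, Matrix.mul_adjugate, hdet, Matrix.smul_apply, smul_eq_mul, mul_assoc]
    exact dvd_mul_right _ _
  choose W hW using hadj
  let W' : Matrix ι ι ℤ := Matrix.of fun a b => W b a
  have hW' : M.adjugate = p ^ j • W' := by
    ext a b; simpa [W'] using hW b a
  have h1 : M * W' = (p ^ k * u) • (1 : Matrix ι ι ℤ) := by
    have := M.mul_adjugate
    rw [hW', hdet, Matrix.mul_smul] at this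
    ext a b
    have h3 := congrFun (congrFun this a) b
    simp only [Matrix.smul_apply, smul_eq_mul] at h3 ⊢
    refine mul_left_cancel₀ (pow_ne_zero j hp.ne_zero) ?_
    rw [h3]; ring
  have h2 := congrArg Matrix.det h1
  rw [Matrix.det_mul, Matrix.det_smul, Matrix.det_one, mul_one, hdet, mul_pow, ← pow_mul] at h2
  have h4 : p ^ (k + j) ∣ p ^ (k * Fintype.card ι) * u ^ Fintype.card ι :=
    ⟨u * W'.det, by rw [← h2]; ring⟩
  have h5 : p ^ (k + j) ∣ p ^ (k * Fintype.card ι) :=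
    hp.pow_dvd_of_dvd_mul_right _ (fun h => hu (hp.dvd_of_dvd_pow h)) h4
  rw [mul_comm]
  exact (pow_dvd_pow_iff hp.ne_zero hp.not_isUnit).1 h5

open NumberField in
lemma hm_trace (K : Type*) [Field K] [NumberField K] (p : ℕ) (hp : p.Prime) (x : 𝓞 K)
    (hx : ∀ y : 𝓞 K, (p : ℤ) ^ (Module.finrank ℚ K * (Module.finrank ℚ K).factorial) ∣
      Algebra.trace ℤ (𝓞 K) (x * y)) : ∃ y : 𝓞 K, x = p * y := by
  set n := Module.finrank ℚ K with hn
  have hn0 : 0 < n := Module.finrank_pos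
  have hpK : (p : K) ≠ 0 := by exact_mod_cast hp.ne_zero
  have hpC : (p : ℂ) ≠ 0 := by exact_mod_cast hp.ne_zero
  set A := integralClosure ℤ ℂ
  have hcard : Fintype.card (K →ₐ[ℚ] ℂ) = n := AlgHom.card ℚ K ℂ
  let s : (K →ₐ[ℚ] ℂ) → A := fun φ =>
    ⟨φ x, (RingOfIntegers.isIntegral_coe x).map (φ.restrictScalars ℤ)⟩
  let q : A := (p : A) ^ (n * n.factorial)
  let I : Ideal A := Ideal.span {q}
  have hs : ∀ j : ℕ, 0 < j → ∑ φ, (Ideal.Quotient.mk I (s φ)) ^ j = 0 := by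
    intro j hj
    obtain ⟨j, rfl⟩ := Nat.exists_eq_add_of_le' hj
    simp_rw [← map_pow]
    rw [← map_sum, Ideal.Quotient.eq_zero_iff_mem, Ideal.mem_span_singleton]
    obtain ⟨c, hc⟩ := hx (x ^ j)
    refine ⟨(c : A), Subtype.ext ?_⟩
    have h1 : ((∑ φ, s φ ^ (j + 1) : A) : ℂ) = ∑ φ : K →ₐ[ℚ] ℂ, φ ((x : K) ^ (j + 1)) := by
      simp [s]
    rw [h1, ← trace_eq_sum_embeddings ℂ (K := ℚ)]
    have h2 := Algebra.coe_trace_int (K := K) (x ^ (j + 1))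
    rw [pow_succ', hc] at h2
    have h3 : ((x : K) ^ (j + 1)) = ((x * x ^ j : 𝓞 K) : K) := by
      push_cast; ring
    rw [h3, ← h2]
    simp [q]
  obtain ⟨φ⟩ : Nonempty (K →ₐ[ℚ] ℂ) := Fintype.card_pos_iff.1 (hcard ▸ hn0)
  have h1 := hm_newton _ hs φ
  rw [hcard, ← map_pow, ← map_natCast (Ideal.Quotient.mk I), ← map_mul,
    Ideal.Quotient.eq_zero_iff_mem, Ideal.mem_span_singleton] at h1
  obtain ⟨α, hα⟩ := h1
  have hα' : (n.factorial : ℂ) * (φ x) ^ n = (p : ℂ) ^ (n * n.factorial) * (α : ℂ) := by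
    simpa [s, q] using congrArg (Subtype.val) hα
  have hIntegral : IsIntegral ℤ ((n.factorial : K) * x / (p : K) ^ n.factorial) := by
    refine IsIntegral.of_pow hn0 ?_
    refine (isIntegral_algHom_iff (φ.restrictScalars ℤ) φ.injective).1 ?_
    have : (φ.restrictScalars ℤ) (((n.factorial : K) * x / (p : K) ^ n.factorial) ^ n) =
        (n.factorial : ℂ) ^ (n - 1) * (α : ℂ) := by
      simp only [AlgHom.restrictScalars_apply, map_pow, map_div₀, map_mul, map_natCast]
      rw [div_pow, ← pow_mul, mul_comm n.factorial n, div_eq_iff (pow_ne_zero _ hpC), mul_pow]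
      obtain ⟨m, hm⟩ := Nat.exists_eq_add_of_le' hn0
      have : (n.factorial : ℂ) ^ n = (n.factorial : ℂ) ^ (n - 1) * n.factorial := by
        rw [← pow_succ]; congr 1; omega
      rw [this]
      linear_combination (n.factorial : ℂ) ^ (n - 1) * hα'
    rw [this]
    refine IsIntegral.mul (IsIntegral.pow ?_ _) α.2
    simpa using isIntegral_algebraMap (R := ℤ) (A := ℂ) (x := (n.factorial : ℤ))
  obtain ⟨β, hβ⟩ : ∃ β : 𝓞 K, (n.factorial : 𝓞 K) * x = (p : 𝓞 K) ^ n.factorial * β := by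
    refine ⟨⟨_, hIntegral⟩, RingOfIntegers.ext ?_⟩
    push_cast
    change _ = (p : K) ^ n.factorial * ((n.factorial : K) * x / (p : K) ^ n.factorial)
    field_simp
  obtain ⟨a, m, hnm, hm⟩ := Nat.exists_eq_pow_mul_and_not_dvd n.factorial_ne_zero p hp.ne_one
  have ha : a < n.factorial := by
    refine lt_of_lt_of_le (Nat.lt_pow_self hp.one_lt (n := a)) ?_
    exact Nat.le_of_dvd n.factorial_pos ⟨m, hm⟩
  obtain ⟨b, hb⟩ := Nat.exists_eq_add_of_lt ha
  have hpO : (p : 𝓞 K) ≠ 0 := by exact_mod_cast hp.ne_zero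
  have h3 : (m : 𝓞 K) * x = p * (p ^ b * β) := by
    refine mul_left_cancel₀ (pow_ne_zero a hpO) ?_
    have e1 : (n.factorial : 𝓞 K) = (p : 𝓞 K) ^ a * m := by
      rw [hm]; push_cast; rfl
    have e2 : (p : 𝓞 K) ^ n.factorial = (p : 𝓞 K) ^ (a + b + 1) := by rw [hb]
    rw [e2, e1] at hβ
    rw [← mul_assoc, hβ]; ring
  obtain ⟨r, t, hrt⟩ : IsCoprime (p : ℤ) (m : ℤ) :=
    Nat.isCoprime_iff_coprime.2 ((Nat.Prime.coprime_iff_not_dvd hp).2 hnm)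
  have hrt' : (r : 𝓞 K) * p + t * m = 1 := by exact_mod_cast congrArg (Int.cast (R := 𝓞 K)) hrt
  refine ⟨r * x + t * (p ^ b * β), ?_⟩
  linear_combination (-x) * hrt' + (t : 𝓞 K) * h3

open NumberField in
lemma hm_discr (K : Type*) [Field K] [NumberField K] (p : ℕ) (hp : p.Prime) :
    (discr K).natAbs.factorization p ≤
      Module.finrank ℚ K * (Module.finrank ℚ K * (Module.finrank ℚ K).factorial) := by
  classical
  set n := Module.finrank ℚ K with hn
  let b := RingOfIntegers.basis K
  have hpi : Prime (p : ℤ) := Nat.prime_iff_prime_int.1 hp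
  have hcard : Fintype.card (Module.Free.ChooseBasisIndex ℤ (𝓞 K)) = n := by
    rw [← Module.finrank_eq_card_chooseBasisIndex, RingOfIntegers.rank]
  have : Nonempty (Module.Free.ChooseBasisIndex ℤ (𝓞 K)) :=
    Fintype.card_pos_iff.1 (hcard ▸ Module.finrank_pos)
  have hd0 : (discr K).natAbs ≠ 0 := Int.natAbs_ne_zero.2 (discr_ne_zero K)
  obtain ⟨N, m, hnm, hm⟩ :=
    (FiniteMultiplicity.of_prime_left hpi (discr_ne_zero K)).exists_eq_pow_mul_and_not_dvd |>
      fun ⟨c, h1, h2⟩ => (⟨_, c, h2, h1⟩ : ∃ N c, ¬ (p : ℤ) ∣ c ∧ discr K = (p : ℤ) ^ N * c)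
  have hN : (discr K).natAbs.factorization p = N := by
    rw [hm, Int.natAbs_mul, Int.natAbs_pow, Int.natAbs_natCast]
    have hm0 : m.natAbs ≠ 0 := by
      rintro h0
      exact hnm (by simp [Int.natAbs_eq_zero.1 h0])
    rw [Nat.factorization_mul (pow_ne_zero _ hp.ne_zero) hm0]
    have : ¬ p ∣ m.natAbs := fun h => hnm (Int.natCast_dvd.2 h)
    simp [hp.factorization_self, Nat.factorization_eq_zero_of_not_dvd this]
  rw [hN]
  have := hm_matrix (Algebra.traceMatrix ℤ b) p hpi (n * n.factorial) ?_ N m hnm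
    (by rw [← hm]; rfl)
  · rwa [hcard] at this
  intro v hv
  let x : 𝓞 K := ∑ i, v i • b i
  have hx : ∀ i, (p : ℤ) ^ (n * n.factorial) ∣ Algebra.trace ℤ (𝓞 K) (x * b i) := by
    intro i
    convert hv i
    simp only [x, Finset.sum_mul, map_sum, Matrix.mulVec, dotProduct, Algebra.traceMatrix_apply,
      Algebra.traceForm_apply, smul_mul_assoc, map_smul, smul_eq_mul]
    exact Finset.sum_congr rfl fun j _ => by rw [mul_comm, mul_comm (b j)]
  obtain ⟨y, hy⟩ := hm_trace K p hp x (fun y => by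
    rw [← b.sum_repr y, Finset.mul_sum, map_sum]
    refine Finset.dvd_sum fun i _ => ?_
    rw [mul_smul_comm, map_smul, smul_eq_mul]
    exact (hx i).mul_left _)
  intro i
  have h1 : b.repr x i = v i := by
    simp only [x]
    rw [b.repr_sum_self]
  have h2 : x = (p : ℤ) • y := by rw [hy]; simp
  rw [← h1, h2, map_smul, Finsupp.smul_apply, smul_eq_mul]
  exact dvd_mul_right _ _

/-- The Hermite–Minkowski finiteness theorem: for every positive integer `n` and finite set
`S` of primes, there are only finitely many subfields of `ℂ` that are number fields of degree
at most `n` whose discriminant has all its prime factors in `S`. -/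
theorem hermite_minkowski (n : ℕ) (hn : 0 < n) (S : Finset ℕ) :
    {K : Subfield ℂ | ∃ h : NumberField K,
      Module.finrank ℚ K ≤ n ∧
      ∀ p : ℕ, p.Prime → (p : ℤ) ∣ NumberField.discr K → p ∈ S}.Finite := by
  classical
  let E := n * (n * n.factorial)
  let B : ℕ := (∏ p ∈ S with p.Prime, p) ^ E
  have hB : B ≠ 0 := pow_ne_zero _ (Finset.prod_ne_zero_iff.2 fun p hp =>
    (Finset.mem_filter.1 hp).2.ne_zero)
  refine ((NumberField.finite_of_discr_bdd ℂ B).image fun F => F.1.toSubfield).subset ?_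
  rintro K ⟨hK, hdeg, hS⟩
  have hQ : ∀ r : ℚ, algebraMap ℚ ℂ r ∈ K := fun r => by simp
  let F : IntermediateField ℚ ℂ := { K with algebraMap_mem' := hQ }
  have hfd : FiniteDimensional ℚ F := hK.to_finiteDimensional
  refine ⟨⟨F, hfd⟩, ?_, rfl⟩
  have hd0 : (NumberField.discr K).natAbs ≠ 0 := Int.natAbs_ne_zero.2 (NumberField.discr_ne_zero K)
  have hdvd : (NumberField.discr K).natAbs ∣ B := by
    rw [← Nat.factorization_prime_le_iff_dvd hd0 hB]
    intro p hp
    by_cases hpd : p ∣ (NumberField.discr K).natAbs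
    · have hpS := hS p hp (Int.natCast_dvd.2 hpd)
      have h1 : p ^ E ∣ B := pow_dvd_pow_of_dvd
        (Finset.dvd_prod_of_mem (fun p => p) (Finset.mem_filter.2 ⟨hpS, hp⟩)) E
      refine (hm_discr K p hp).trans (le_trans ?_ ((hp.pow_dvd_iff_le_factorization hB).1 h1))
      have := Nat.factorial_le hdeg
      simp only [E]
      gcongr
    · rw [Nat.factorization_eq_zero_of_not_dvd hpd]; exact Nat.zero_le _
  have hle : |NumberField.discr K| ≤ B := by
    rw [Int.abs_eq_natAbs]
    exact_mod_cast Nat.le_of_dvd (Nat.pos_of_ne_zero hB) hdvd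
  exact hle
end
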